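/- Let (W_n) be a sequence of graphons and let W be a graphon. Then t(F,W_n) converges for every finite simple graph F if and only if (W_n) is a Cauchy sequence in the cut distance δ_□. Furthermore, t(F,W_n) → t(F,W) for every finite simple graph F if and only if δ_□(W_n, W) → 0. -/

import Mathlib

open MeasureTheory Set Filter

/-- The Lebesgue measure restricted to `[0,1]`. -/
noncomputable abbrev μ01 : MeasureTheory.Measure ℝ :=
  MeasureTheory.volume.restrict (Set.Icc (0:ℝ) 1)

/-- A graphon: a symmetric measurable function `[0,1]² → [0,1]`
(defined on all of `ℝ²` for convenience). -/
def IsGraphon (W : ℝ → ℝ → ℝ) : Prop :=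
  Measurable (Function.uncurry W) ∧ (∀ x y, W x y = W y x) ∧ ∀ x y, W x y ∈ Set.Icc (0:ℝ) 1

-- The homomorphism density `t(F,W)` of a finite simple graph `F` in a graphon `W`.
open scoped Classical in
noncomputable def homDensity {n : ℕ} (F : SimpleGraph (Fin n)) (W : ℝ → ℝ → ℝ) : ℝ :=
  ∫ x : Fin n → ℝ,
    (∏ p ∈ Finset.univ.filter (fun p : Fin n × Fin n => p.1 < p.2 ∧ F.Adj p.1 p.2),
      W (x p.1) (x p.2)) ∂(MeasureTheory.Measure.pi fun _ => μ01)

/-- The cut norm `‖U‖_□` of a kernel `U`. -/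
noncomputable def cutNorm (U : ℝ → ℝ → ℝ) : ℝ :=
  sSup { r : ℝ | ∃ S T : Set ℝ, MeasurableSet S ∧ MeasurableSet T ∧
    S ⊆ Set.Icc (0:ℝ) 1 ∧ T ⊆ Set.Icc (0:ℝ) 1 ∧
    r = |∫ x in S, ∫ y in T, U x y| }

/-- An invertible measure preserving map of `[0,1]` onto itself. -/
def IsInvMeasurePreserving (φ : ℝ → ℝ) : Prop :=
  Set.MapsTo φ (Set.Icc (0:ℝ) 1) (Set.Icc (0:ℝ) 1) ∧
  MeasureTheory.MeasurePreserving φ μ01 μ01 ∧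
  ∃ ψ : ℝ → ℝ, Set.MapsTo ψ (Set.Icc (0:ℝ) 1) (Set.Icc (0:ℝ) 1) ∧
    MeasureTheory.MeasurePreserving ψ μ01 μ01 ∧
    (∀ x ∈ Set.Icc (0:ℝ) 1, ψ (φ x) = x) ∧ (∀ x ∈ Set.Icc (0:ℝ) 1, φ (ψ x) = x)

/-- The cut distance `δ_□(U,W)` between two graphons. -/
noncomputable def cutDist (U W : ℝ → ℝ → ℝ) : ℝ :=
  sInf { r : ℝ | ∃ φ : ℝ → ℝ, IsInvMeasurePreserving φ ∧
    r = cutNorm (fun x y => U x y - W (φ x) (φ y)) }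


/-! ## Discrete cut bounds -/

/-- Unnormalised discrete cut norm bound. -/
def CutLE {V : Type*} (D : V → V → ℝ) (c : ℝ) : Prop :=
  ∀ S T : Finset V, |∑ i ∈ S, ∑ j ∈ T, D i j| ≤ c

lemma lin_ext {V : Type*} [Fintype V] (u : V → ℝ) (c : ℝ)
    (h : ∀ S : Finset V, |∑ i ∈ S, u i| ≤ c) (s : V → ℝ) (h0 : ∀ i, 0 ≤ s i) (h1 : ∀ i, s i ≤ 1) :
    |∑ i, u i * s i| ≤ c := by
  classical
  rw [abs_le]
  constructor
  · have := (abs_le.1 (h (Finset.univ.filter (fun i => u i < 0)))).1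
    refine this.trans ?_
    rw [Finset.sum_filter]
    refine Finset.sum_le_sum fun i _ => ?_
    split_ifs with hi
    · nlinarith [h0 i, h1 i]
    · exact mul_nonneg (not_lt.1 hi) (h0 i)
  · have := (abs_le.1 (h (Finset.univ.filter (fun i => 0 < u i)))).2
    refine le_trans ?_ this
    rw [Finset.sum_filter]
    refine Finset.sum_le_sum fun i _ => ?_
    split_ifs with hi
    · nlinarith [h0 i, h1 i]
    · nlinarith [h0 i, not_lt.1 hi]

lemma lin_ext2 {V : Type*} [Fintype V] (u : V → ℝ) (c : ℝ)
    (h : ∀ S : Finset V, |∑ i ∈ S, u i| ≤ c) (s : V → ℝ) (h1 : ∀ i, |s i| ≤ 1) :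
    |∑ i, u i * s i| ≤ 2 * c := by
  have e : ∑ i, u i * s i = ∑ i, u i * max (s i) 0 - ∑ i, u i * max (- s i) 0 := by
    rw [← Finset.sum_sub_distrib]
    refine Finset.sum_congr rfl fun i _ => ?_
    rw [← mul_sub]
    congr 1
    rcases le_total (s i) 0 with h | h
    · rw [max_eq_right h, max_eq_left (by linarith)]; ring
    · rw [max_eq_left h, max_eq_right (by linarith)]; ring
  rw [e]
  have a1 := lin_ext u c h (fun i => max (s i) 0) (fun i => le_max_right _ _)
    (fun i => max_le (abs_le.1 (h1 i)).2 zero_le_one)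
  have a2 := lin_ext u c h (fun i => max (-s i) 0) (fun i => le_max_right _ _)
    (fun i => max_le (by linarith [(abs_le.1 (h1 i)).1]) zero_le_one)
  rw [abs_le] at *
  constructor <;> linarith

lemma CutLE.nonneg {V : Type*} {D : V → V → ℝ} {c : ℝ} (h : CutLE D c) : 0 ≤ c := by
  simpa using h ∅ ∅

lemma CutLE.fun1 {V : Type*} [Fintype V] {D : V → V → ℝ} {c : ℝ} (h : CutLE D c)
    (s t : V → ℝ) (hs : ∀ i, 0 ≤ s i) (hs1 : ∀ i, s i ≤ 1) (ht : ∀ i, 0 ≤ t i)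
    (ht1 : ∀ i, t i ≤ 1) : |∑ i, ∑ j, D i j * s i * t j| ≤ c := by
  have key : ∀ S : Finset V, |∑ i ∈ S, ∑ j, D i j * t j| ≤ c := by
    intro S
    rw [Finset.sum_comm]
    simp_rw [← Finset.sum_mul]
    refine lin_ext _ c (fun T => ?_) t ht ht1
    rw [Finset.sum_comm]
    exact h S T
  have := lin_ext _ c key s hs hs1
  convert this using 2
  refine Finset.sum_congr rfl fun i _ => ?_
  rw [Finset.sum_mul]
  exact Finset.sum_congr rfl fun j _ => by ring

lemma CutLE.fun2 {V : Type*} [Fintype V] {D : V → V → ℝ} {c : ℝ} (h : CutLE D c)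
    (s t : V → ℝ) (hs : ∀ i, |s i| ≤ 1) (ht : ∀ i, |t i| ≤ 1) :
    |∑ i, ∑ j, D i j * s i * t j| ≤ 4 * c := by
  have key : ∀ S : Finset V, |∑ i ∈ S, ∑ j, D i j * t j| ≤ 2 * c := by
    intro S
    rw [Finset.sum_comm]
    simp_rw [← Finset.sum_mul]
    refine lin_ext2 _ c (fun T => ?_) t ht
    rw [Finset.sum_comm]
    exact h S T
  have := lin_ext2 _ (2 * c) key s hs
  rw [show 2 * (2 * c) = 4 * c by ring] at this
  convert this using 2
  refine Finset.sum_congr rfl fun i _ => ?_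
  rw [Finset.sum_mul]
  exact Finset.sum_congr rfl fun j _ => by ring

lemma CutLE.mono {V : Type*} {D : V → V → ℝ} {c c' : ℝ} (h : CutLE D c) (hc : c ≤ c') :
    CutLE D c' := fun S T => (h S T).trans hc

lemma CutLE.add {V : Type*} {D D' : V → V → ℝ} {c c' : ℝ} (h : CutLE D c) (h' : CutLE D' c') :
    CutLE (fun i j => D i j + D' i j) (c + c') := by
  intro S T
  simp_rw [Finset.sum_add_distrib]
  exact (abs_add_le _ _).trans (add_le_add (h S T) (h' S T))

lemma CutLE.neg {V : Type*} {D : V → V → ℝ} {c : ℝ} (h : CutLE D c) :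
    CutLE (fun i j => - D i j) c := by
  intro S T
  simp_rw [Finset.sum_neg_distrib, abs_neg]
  exact h S T

lemma CutLE.comp_equiv {V V' : Type*} {D : V → V → ℝ} {c : ℝ} (h : CutLE D c) (σ : V' ≃ V) :
    CutLE (fun i j => D (σ i) (σ j)) c := by
  intro S T
  have := h (S.map σ.toEmbedding) (T.map σ.toEmbedding)
  simpa [Finset.sum_map] using this

lemma CutLE.of_l1 {V : Type*} [Fintype V] {D : V → V → ℝ} {c : ℝ}
    (h : ∑ i, ∑ j, |D i j| ≤ c) : CutLE D c := by
  intro S T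
  calc |∑ i ∈ S, ∑ j ∈ T, D i j| ≤ ∑ i ∈ S, ∑ j ∈ T, |D i j| :=
        (Finset.abs_sum_le_sum_abs _ _).trans
          (Finset.sum_le_sum fun i _ => Finset.abs_sum_le_sum_abs _ _)
    _ ≤ ∑ i ∈ S, ∑ j, |D i j| := Finset.sum_le_sum fun i _ =>
        Finset.sum_le_sum_of_subset_of_nonneg (Finset.subset_univ _) fun _ _ _ => abs_nonneg _
    _ ≤ ∑ i, ∑ j, |D i j| :=
        Finset.sum_le_sum_of_subset_of_nonneg (Finset.subset_univ _) fun _ _ _ =>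
          Finset.sum_nonneg fun _ _ => abs_nonneg _
    _ ≤ c := h

/-- pulling back along a map with all fibres of size `≤ k`. -/
lemma CutLE.pullback {V V' : Type*} [Fintype V] [Fintype V'] [DecidableEq V] {D : V → V → ℝ}
    {c : ℝ} (h : CutLE D c) (f : V' → V) (k : ℕ) (hk : 0 < k)
    (hf : ∀ v, (Finset.univ.filter (fun w => f w = v)).card ≤ k) :
    CutLE (fun i j => D (f i) (f j)) (k ^ 2 * c) := by
  intro S T
  have hk' : (0:ℝ) < k := by exact_mod_cast hk
  set s : Finset V' → V → ℝ := fun S v => ((S.filter (fun w => f w = v)).card : ℝ) / k with hs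
  have hs0 : ∀ S v, 0 ≤ s S v := fun S v => by positivity
  have hs1 : ∀ S v, s S v ≤ 1 := fun S v => by
    rw [hs, div_le_one hk']
    exact_mod_cast (Finset.card_le_card (Finset.filter_subset_filter _ (Finset.subset_univ S))).trans
      (hf v)
  have e : ∑ i ∈ S, ∑ j ∈ T, D (f i) (f j)
      = k ^ 2 * ∑ v, ∑ w, D v w * s S v * s T w := by
    have g : ∀ (S : Finset V') (F : V → ℝ), ∑ i ∈ S, F (f i) = ∑ v, F v * (k * s S v) := by
      intro S F
      rw [← Finset.sum_fiberwise_of_maps_to (s := S) (t := Finset.univ) (g := f)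
        (fun _ _ => Finset.mem_univ _)]
      refine Finset.sum_congr rfl fun v _ => ?_
      rw [Finset.sum_congr rfl (g := fun _ => F v)]
      · simp [hs]; field_simp
      · intro x hx; rw [(Finset.mem_filter.1 hx).2]
    have : ∀ i, ∑ j ∈ T, D (f i) (f j) = ∑ w, D (f i) w * (k * s T w) := fun i => g T _
    simp_rw [this]
    rw [g S (fun v => ∑ w, D v w * (k * s T w)), Finset.mul_sum]
    refine Finset.sum_congr rfl fun v _ => ?_
    rw [Finset.sum_mul, Finset.mul_sum]
    exact Finset.sum_congr rfl fun w _ => by ring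
  rw [e, abs_mul, abs_of_nonneg (by positivity : (0:ℝ) ≤ (k:ℝ)^2)]
  exact mul_le_mul_of_nonneg_left (h.fun1 _ _ (hs0 S) (hs1 S) (hs0 T) (hs1 T)) (by positivity)

/-! ## C4 bounds -/

/-- unnormalised `C₄` count. -/
def c4 {V : Type*} [Fintype V] (D : V → V → ℝ) : ℝ := ∑ j, ∑ j', (∑ i, D i j * D i j') ^ 2

lemma c4_nonneg {V : Type*} [Fintype V] (D : V → V → ℝ) : 0 ≤ c4 D :=
  Finset.sum_nonneg fun _ _ => Finset.sum_nonneg fun _ _ => sq_nonneg _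

lemma c4_eq {V : Type*} [Fintype V] (D : V → V → ℝ) :
    c4 D = ∑ j, ∑ j', ∑ i, ∑ i', D i j * D i j' * D i' j * D i' j' := by
  unfold c4
  refine Finset.sum_congr rfl fun j _ => Finset.sum_congr rfl fun j' _ => ?_
  rw [sq, Finset.sum_mul_sum]
  exact Finset.sum_congr rfl fun i _ => Finset.sum_congr rfl fun i' _ => by ring

lemma cut_pow_four_le {V : Type*} [Fintype V] (D : V → V → ℝ) (s t : V → ℝ)
    (hs : ∀ i, |s i| ≤ 1) (ht : ∀ i, |t i| ≤ 1) :
    (∑ i, ∑ j, D i j * s i * t j) ^ 4 ≤ (Fintype.card V : ℝ) ^ 4 * c4 D := by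
  set N : ℝ := (Fintype.card V : ℝ) with hN
  have hN0 : 0 ≤ N := by positivity
  have sqs : ∀ r : V → ℝ, (∀ i, |r i| ≤ 1) → ∀ i, (r i) ^ 2 ≤ 1 := fun r hr i => by
    rw [sq_le_one_iff_abs_le_one]; exact hr i
  have h1 : (∑ i, ∑ j, D i j * s i * t j) ^ 2 ≤ N * ∑ i, (∑ j, D i j * t j) ^ 2 := by
    have e : ∑ i, ∑ j, D i j * s i * t j = ∑ i, s i * ∑ j, D i j * t j := by
      refine Finset.sum_congr rfl fun i _ => ?_
      rw [Finset.mul_sum]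
      exact Finset.sum_congr rfl fun j _ => by ring
    rw [e]
    refine (Finset.sum_mul_sq_le_sq_mul_sq _ _ _).trans ?_
    refine mul_le_mul_of_nonneg_right ?_ (Finset.sum_nonneg fun _ _ => sq_nonneg _)
    refine (Finset.sum_le_sum fun i _ => sqs s hs i).trans ?_
    simp [hN]
  have h2 : ∑ i, (∑ j, D i j * t j) ^ 2 = ∑ p : V × V, (t p.1 * t p.2) * (∑ i, D i p.1 * D i p.2) := by
    rw [Fintype.sum_prod_type]
    simp_rw [sq, Finset.sum_mul_sum, Finset.mul_sum]
    rw [Finset.sum_comm]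
    refine Finset.sum_congr rfl fun j _ => ?_
    rw [Finset.sum_comm]
    refine Finset.sum_congr rfl fun j _ => ?_
    refine Finset.sum_congr rfl fun j _ => ?_
    ring
  have h3 : (∑ i, (∑ j, D i j * t j) ^ 2) ^ 2 ≤ N ^ 2 * c4 D := by
    rw [h2]
    refine (Finset.sum_mul_sq_le_sq_mul_sq _ _ _).trans ?_
    have : c4 D = ∑ p : V × V, (∑ i, D i p.1 * D i p.2) ^ 2 := by
      rw [Fintype.sum_prod_type]; rfl
    rw [← this]
    refine mul_le_mul_of_nonneg_right ?_ (c4_nonneg D)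
    have : ∀ p : V × V, (t p.1 * t p.2) ^ 2 ≤ 1 := fun p => by
      rw [mul_pow]
      exact mul_le_one₀ (sqs t ht _) (sq_nonneg _) (sqs t ht _)
    refine (Finset.sum_le_sum fun p _ => this p).trans ?_
    simp [hN, sq]
  calc (∑ i, ∑ j, D i j * s i * t j) ^ 4 = ((∑ i, ∑ j, D i j * s i * t j) ^ 2) ^ 2 := by ring
    _ ≤ (N * ∑ i, (∑ j, D i j * t j) ^ 2) ^ 2 := by
        exact pow_le_pow_left₀ (sq_nonneg _) h1 2
    _ = N ^ 2 * (∑ i, (∑ j, D i j * t j) ^ 2) ^ 2 := by ring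
    _ ≤ N ^ 2 * (N ^ 2 * c4 D) := mul_le_mul_of_nonneg_left h3 (by positivity)
    _ = _ := by ring

lemma CutLE.of_c4 {V : Type*} [Fintype V] (D : V → V → ℝ) (ε : ℝ) (hε : 0 ≤ ε)
    (h : c4 D ≤ ε ^ 4 * (Fintype.card V : ℝ) ^ 4) : CutLE D (ε * (Fintype.card V : ℝ) ^ 2) := by
  classical
  intro S T
  set ind : Finset V → V → ℝ := fun S i => if i ∈ S then 1 else 0 with hi
  have hind : ∀ S i, |ind S i| ≤ 1 := fun S i => by simp only [hi]; split_ifs <;> simp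
  have := cut_pow_four_le D (ind S) (ind T) (hind S) (hind T)
  have e : ∑ i, ∑ j, D i j * ind S i * ind T j = ∑ i ∈ S, ∑ j ∈ T, D i j := by
    simp [hi, Finset.sum_ite_mem]
  rw [e] at this
  have h2 : (∑ i ∈ S, ∑ j ∈ T, D i j) ^ 4 ≤ (ε * (Fintype.card V : ℝ) ^ 2) ^ 4 := by
    refine this.trans ?_
    calc _ ≤ (Fintype.card V : ℝ) ^ 4 * (ε ^ 4 * (Fintype.card V : ℝ) ^ 4) :=
          mul_le_mul_of_nonneg_left h (by positivity)
      _ = _ := by ring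
  have h3 : |∑ i ∈ S, ∑ j ∈ T, D i j| ^ 4 ≤ (ε * (Fintype.card V : ℝ) ^ 2) ^ 4 := by
    rwa [Even.pow_abs (by decide)]
  exact le_of_pow_le_pow_left₀ (by norm_num) (by positivity) h3

lemma c4_le_of_cut {V : Type*} [Fintype V] (D : V → V → ℝ) (c : ℝ) (h : CutLE D c)
    (hD : ∀ i j, |D i j| ≤ 1) : c4 D ≤ 4 * c * (Fintype.card V : ℝ) ^ 2 := by
  rw [c4_eq]
  have e : ∑ j, ∑ j', ∑ i, ∑ i', D i j * D i j' * D i' j * D i' j'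
      = ∑ j', ∑ i', D i' j' * ∑ i, ∑ j, D i j * D i j' * D i' j := by
    rw [Finset.sum_comm]
    refine Finset.sum_congr rfl fun j' _ => ?_
    simp_rw [Finset.mul_sum]
    rw [Finset.sum_comm]
    simp_rw [Finset.sum_comm (s := (Finset.univ : Finset V)) (t := (Finset.univ : Finset V))
      (f := fun j i' => D _ j * _ * D i' j * _)]
    rw [Finset.sum_comm]
    refine Finset.sum_congr rfl fun i' _ => Finset.sum_congr rfl fun i _ =>
      Finset.sum_congr rfl fun j _ => by ring
  rw [e]
  have : ∀ j' i', D i' j' * ∑ i, ∑ j, D i j * D i j' * D i' j ≤ 4 * c := by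
    intro j' i'
    have h1 := h.fun2 (fun i => D i j') (fun j => D i' j) (fun i => hD _ _) (fun i => hD _ _)
    have h0 := h.nonneg
    calc _ ≤ |D i' j' * ∑ i, ∑ j, D i j * D i j' * D i' j| := le_abs_self _
      _ = |D i' j'| * |∑ i, ∑ j, D i j * D i j' * D i' j| := abs_mul _ _
      _ ≤ 1 * (4 * c) := mul_le_mul (hD _ _) h1 (abs_nonneg _) zero_le_one
      _ = _ := one_mul _
  refine (Finset.sum_le_sum fun j' _ => Finset.sum_le_sum fun i' _ => this j' i').trans ?_
  simp
  apply le_of_eq; ring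

/-! ## Weak regularity -/

lemma clamp_sq (b z : ℝ) (hb0 : 0 ≤ b) (hb1 : b ≤ 1) :
    (b - max 0 (min 1 z)) ^ 2 ≤ (b - z) ^ 2 := by
  rcases le_total 1 z with h | h
  · rw [min_eq_left h, max_eq_right zero_le_one]; nlinarith
  · rw [min_eq_right h]
    rcases le_total 0 z with h' | h'
    · rw [max_eq_right h']
    · rw [max_eq_left h']; nlinarith

lemma weak_reg_step {V : Type*} [Fintype V] (B : V → V → ℝ) (hsym : ∀ i j, B i j = B j i)
    (hB : ∀ i j, B i j ∈ Icc (0:ℝ) 1) (ε : ℝ) (hε : 0 < ε) (ι : Type) [Fintype ι] (p : V → ι)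
    (A : ι → ι → ℝ) (hA : ∀ a b, A a b = A b a)
    (hc : ¬ CutLE (fun i j => B i j - A (p i) (p j)) (ε * (Fintype.card V : ℝ) ^ 2)) :
    ∃ (p' : V → ι × Bool × Bool) (A' : ι × Bool × Bool → ι × Bool × Bool → ℝ),
      (∀ a b, A' a b = A' b a) ∧ (∀ a b, A' a b ∈ Icc (0:ℝ) 1) ∧
      ∑ i, ∑ j, (B i j - A' (p' i) (p' j)) ^ 2 ≤
        ∑ i, ∑ j, (B i j - A (p i) (p j)) ^ 2 - ε ^ 2 * (Fintype.card V : ℝ) ^ 2 := by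
  classical
  simp only [CutLE, not_forall, not_le] at hc
  obtain ⟨S, T, hST⟩ := hc
  set N : ℝ := (Fintype.card V : ℝ) with hN
  set D : V → V → ℝ := fun i j => B i j - A (p i) (p j) with hD
  have hDs : ∀ i j, D i j = D j i := fun i j => by simp only [hD]; rw [hsym, hA]
  obtain ⟨c, hc1, hc2⟩ : ∃ c : ℝ, c ^ 2 = ε ^ 2 / 4 ∧
      c * (∑ i ∈ S, ∑ j ∈ T, D i j) ≥ ε / 2 * (ε * N ^ 2) := by
    rcases le_total 0 (∑ i ∈ S, ∑ j ∈ T, D i j) with h | h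
    · refine ⟨ε / 2, by ring, ?_⟩
      rw [abs_of_nonneg h] at hST
      exact mul_le_mul_of_nonneg_left hST.le (by positivity)
    · refine ⟨-(ε / 2), by ring, ?_⟩
      rw [abs_of_nonpos h] at hST
      have := mul_le_mul_of_nonneg_left hST.le (by positivity : 0 ≤ ε / 2)
      linarith
  let χ : Bool → Bool → ℝ := fun a b => if a = true ∧ b = true then 1 else 0
  refine ⟨fun v => (p v, decide (v ∈ S), decide (v ∈ T)), fun a b =>
    max 0 (min 1 (A a.1 b.1 + c * (χ a.2.1 b.2.2 + χ b.2.1 a.2.2))), ?_, ?_, ?_⟩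
  · intro a b
    dsimp only
    rw [hA a.1 b.1, add_comm (χ a.2.1 b.2.2)]
  · intro a b
    exact ⟨le_max_left _ _, max_le zero_le_one (min_le_left _ _)⟩
  · set X : V → V → ℝ := fun i j => if i ∈ S ∧ j ∈ T then 1 else 0 with hX
    have hX0 : ∀ i j, X i j = 0 ∨ X i j = 1 := fun i j => by simp only [hX]; split_ifs <;> simp
    have hsum : ∑ i, ∑ j, D i j * X i j = ∑ i ∈ S, ∑ j ∈ T, D i j := by
      simp [hX, ite_and, Finset.sum_ite_mem]
    have hsum' : ∑ i, ∑ j, D i j * X j i = ∑ i ∈ S, ∑ j ∈ T, D i j := by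
      rw [← hsum, Finset.sum_comm]
      exact Finset.sum_congr rfl fun i _ => Finset.sum_congr rfl fun j _ => by rw [hDs]
    calc _ ≤ ∑ i, ∑ j, (D i j ^ 2 - 2 * c * (D i j * X i j) - 2 * c * (D i j * X j i) + 4 * c ^ 2) := by
          refine Finset.sum_le_sum fun i _ => Finset.sum_le_sum fun j _ => ?_
          refine (clamp_sq _ _ (hB i j).1 (hB i j).2).trans ?_
          have e1 : χ (decide (i ∈ S)) (decide (j ∈ T)) = X i j := by simp [χ, hX]
          have e2 : χ (decide (j ∈ S)) (decide (i ∈ T)) = X j i := by simp [χ, hX]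
          simp only [e1, e2]
          have : (X i j + X j i) ^ 2 ≤ 4 := by
            rcases hX0 i j with h | h <;> rcases hX0 j i with h' | h' <;> rw [h, h'] <;> norm_num
          have h4 := mul_le_mul_of_nonneg_left this (sq_nonneg c)
          simp only [hD]
          nlinarith
      _ = ∑ i, ∑ j, D i j ^ 2 - 2 * c * (∑ i ∈ S, ∑ j ∈ T, D i j)
            - 2 * c * (∑ i ∈ S, ∑ j ∈ T, D i j) + N ^ 2 * (4 * c ^ 2) := by
          simp_rw [Finset.sum_add_distrib, Finset.sum_sub_distrib, ← Finset.mul_sum]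
          rw [hsum, hsum']
          simp [hN]
          ring
      _ ≤ _ := by
          rw [hc1]
          nlinarith

lemma weak_reg {V : Type*} [Fintype V] (B : V → V → ℝ) (hsym : ∀ i j, B i j = B j i)
    (hB : ∀ i j, B i j ∈ Icc (0:ℝ) 1) (hV : 0 < Fintype.card V)
    (ε : ℝ) (hε : 0 < ε) (J : ℕ) (hJ : 1 < J * ε ^ 2) :
    ∃ (ι : Type) (_ : Fintype ι) (p : V → ι) (A : ι → ι → ℝ), Fintype.card ι ≤ 4 ^ J ∧
      (∀ a b, A a b = A b a) ∧ (∀ a b, A a b ∈ Icc (0:ℝ) 1) ∧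
      CutLE (fun i j => B i j - A (p i) (p j)) (ε * (Fintype.card V : ℝ) ^ 2) := by
  by_contra hcon
  have key : ∀ j ≤ J, ∃ (ι : Type) (_ : Fintype ι) (p : V → ι) (A : ι → ι → ℝ),
      Fintype.card ι ≤ 4 ^ j ∧ (∀ a b, A a b = A b a) ∧ (∀ a b, A a b ∈ Icc (0:ℝ) 1) ∧
      ∑ i, ∑ j, (B i j - A (p i) (p j)) ^ 2 ≤ (1 - j * ε ^ 2) * (Fintype.card V : ℝ) ^ 2 := by
    intro j hj
    induction j with
    | zero =>
      refine ⟨Unit, inferInstance, fun _ => (), fun _ _ => 0, by simp, by simp, by simp, ?_⟩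
      have : ∀ i j, (B i j - 0) ^ 2 ≤ 1 := fun i j => by
        have := hB i j
        rw [sub_zero]
        exact pow_le_one₀ this.1 this.2
      refine (Finset.sum_le_sum fun i _ => Finset.sum_le_sum fun j _ => this i j).trans ?_
      simp [sq]
    | succ j ih =>
      obtain ⟨ι, _, p, A, h1, h2, h3, h4⟩ := ih (by omega)
      have : ¬ CutLE (fun i j => B i j - A (p i) (p j)) (ε * (Fintype.card V : ℝ) ^ 2) := fun h =>
        hcon ⟨ι, inferInstance, p, A, h1.trans (Nat.pow_le_pow_right (by norm_num) (by omega)),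
          h2, h3, h⟩
      obtain ⟨p', A', g1, g2, g3⟩ := weak_reg_step B hsym hB ε hε ι p A h2 this
      refine ⟨_, inferInstance, p', A', ?_, g1, g2, ?_⟩
      · simp only [Fintype.card_prod, Fintype.card_bool, pow_succ]
        omega
      · refine g3.trans ?_
        push_cast
        nlinarith
  obtain ⟨ι, _, p, A, -, -, -, h⟩ := key J le_rfl
  have h0 : 0 ≤ ∑ i, ∑ j, (B i j - A (p i) (p j)) ^ 2 :=
    Finset.sum_nonneg fun _ _ => Finset.sum_nonneg fun _ _ => sq_nonneg _
  have hN : (0:ℝ) < (Fintype.card V : ℝ) ^ 2 := by positivity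
  nlinarith

/-! ## Discrete counting lemma -/

lemma sum_update {ι V : Type*} [Fintype ι] [DecidableEq ι] [Fintype V] (i : ι)
    (g : (ι → V) → ℝ) :
    ∑ f : ι → V, ∑ u, g (Function.update f i u) = (Fintype.card V : ℝ) * ∑ f, g f := by
  have : ∑ f : ι → V, ∑ u, g (Function.update f i u) = ∑ f : ι → V, ∑ _u : V, g f := by
    rw [← Fintype.sum_prod_type', ← Fintype.sum_prod_type']
    refine Finset.sum_nbij' (fun x => (Function.update x.1 i x.2, x.1 i))
      (fun x => (Function.update x.1 i x.2, x.1 i)) ?_ ?_ ?_ ?_ ?_ <;> simp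
  rw [this]
  simp [Finset.mul_sum]

lemma counting_step {ι V : Type*} [Fintype ι] [LinearOrder ι] [Fintype V]
    (D : V → V → ℝ) (c : ℝ) (hD : CutLE D c) (E : Finset (ι × ι))
    (hE : ∀ e ∈ E, e.1 < e.2) (e : ι × ι) (he : e.1 < e.2) (heE : e ∉ E)
    (w : ι × ι → V → V → ℝ) (hw : ∀ e i j, w e i j ∈ Icc (0:ℝ) 1) :
    (Fintype.card V : ℝ) ^ 2 * |∑ f : ι → V, D (f e.1) (f e.2) * ∏ e' ∈ E, w e' (f e'.1) (f e'.2)| ≤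
      c * (Fintype.card V : ℝ) ^ (Fintype.card ι) := by
  set N : ℝ := (Fintype.card V : ℝ) with hN
  have h1 : N ^ 2 * ∑ f : ι → V, D (f e.1) (f e.2) * ∏ e' ∈ E, w e' (f e'.1) (f e'.2)
      = ∑ f : ι → V, ∑ u, ∑ v, D u v *
        ∏ e' ∈ E, w e' (Function.update (Function.update f e.1 u) e.2 v e'.1)
          (Function.update (Function.update f e.1 u) e.2 v e'.2) := by
    have a1 := sum_update e.2 (fun f : ι → V => D (f e.1) (f e.2) * ∏ e' ∈ E, w e' (f e'.1) (f e'.2))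
    have a2 := sum_update e.1 (fun f : ι → V => ∑ v, D (Function.update f e.2 v e.1)
      (Function.update f e.2 v e.2) * ∏ e' ∈ E, w e' (Function.update f e.2 v e'.1)
        (Function.update f e.2 v e'.2))
    rw [a1] at a2
    rw [sq, mul_assoc, ← a2]
    refine Finset.sum_congr rfl fun f _ => Finset.sum_congr rfl fun u _ =>
      Finset.sum_congr rfl fun v _ => ?_
    congr 2
    · rw [Function.update_of_ne he.ne, Function.update_self]
    · rw [Function.update_self]
  have h2 : ∀ f : ι → V, |∑ u, ∑ v, D u v *
        ∏ e' ∈ E, w e' (Function.update (Function.update f e.1 u) e.2 v e'.1)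
          (Function.update (Function.update f e.1 u) e.2 v e'.2)| ≤ c := by
    intro f
    set s : V → ℝ := fun u => ∏ e' ∈ E.filter (fun e' => e'.1 = e.1 ∨ e'.2 = e.1),
      w e' (Function.update f e.1 u e'.1) (Function.update f e.1 u e'.2) with hs
    set t : V → ℝ := fun v => ∏ e' ∈ E.filter (fun e' => ¬ (e'.1 = e.1 ∨ e'.2 = e.1)),
      w e' (Function.update f e.2 v e'.1) (Function.update f e.2 v e'.2) with ht
    have e0 : ∀ u v, ∏ e' ∈ E, w e' (Function.update (Function.update f e.1 u) e.2 v e'.1)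
          (Function.update (Function.update f e.1 u) e.2 v e'.2) = s u * t v := by
      intro u v
      rw [← Finset.prod_filter_mul_prod_filter_not E (fun e' => e'.1 = e.1 ∨ e'.2 = e.1)]
      congr 1
      · refine Finset.prod_congr rfl fun e' he' => ?_
        rw [Finset.mem_filter] at he'
        have hlt := hE e' he'.1
        have hne : e' ≠ e := fun h => heE (h ▸ he'.1)
        have n1 : e'.1 ≠ e.2 := by
          rintro h
          rcases he'.2 with h' | h'
          · rw [h'] at h; exact he.ne h
          · rw [h, h'] at hlt; exact lt_asymm hlt he
        have n2 : e'.2 ≠ e.2 := by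
          rintro h
          rcases he'.2 with h' | h'
          · exact hne (Prod.ext h' h)
          · rw [h'] at h; exact he.ne h
        rw [Function.update_of_ne n1, Function.update_of_ne n2]
      · refine Finset.prod_congr rfl fun e' he' => ?_
        rw [Finset.mem_filter, not_or] at he'
        rw [Function.update_comm he.ne, Function.update_of_ne he'.2.1,
          Function.update_of_ne he'.2.2]
    simp_rw [e0, ← mul_assoc]
    refine hD.fun1 s t ?_ ?_ ?_ ?_
    · exact fun u => Finset.prod_nonneg fun e' _ => (hw _ _ _).1
    · exact fun u => Finset.prod_le_one (fun e' _ => (hw _ _ _).1) (fun e' _ => (hw _ _ _).2)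
    · exact fun u => Finset.prod_nonneg fun e' _ => (hw _ _ _).1
    · exact fun u => Finset.prod_le_one (fun e' _ => (hw _ _ _).1) (fun e' _ => (hw _ _ _).2)
  rw [← abs_of_nonneg (by positivity : 0 ≤ N ^ 2), ← abs_mul, h1]
  refine (Finset.abs_sum_le_sum_abs _ _).trans ?_
  refine (Finset.sum_le_sum fun f _ => h2 f).trans ?_
  simp [hN]
  apply le_of_eq; ring

/-- unnormalised discrete homomorphism count -/
def homD {ι V : Type*} [Fintype ι] [DecidableEq ι] [Fintype V] (E : Finset (ι × ι))
    (B : V → V → ℝ) : ℝ :=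
  ∑ f : ι → V, ∏ e ∈ E, B (f e.1) (f e.2)

lemma counting_disc {ι V : Type*} [Fintype ι] [LinearOrder ι] [Fintype V]
    (A B : V → V → ℝ) (c : ℝ) (hV : 0 < Fintype.card V)
    (hD : CutLE (fun i j => A i j - B i j) (c * (Fintype.card V : ℝ) ^ 2))
    (hA : ∀ i j, A i j ∈ Icc (0:ℝ) 1) (hB : ∀ i j, B i j ∈ Icc (0:ℝ) 1)
    (E : Finset (ι × ι)) (hE : ∀ e ∈ E, e.1 < e.2) :
    |homD E A - homD E B| ≤ E.card * c * (Fintype.card V : ℝ) ^ (Fintype.card ι) := by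
  classical
  set N : ℝ := (Fintype.card V : ℝ) with hN
  have hN0 : 0 < N := by rw [hN]; exact_mod_cast hV
  have step : ∀ S : Finset (ι × ι), S ⊆ E →
      |∑ f : ι → V, ∏ e ∈ E, (if e ∈ S then A else B) (f e.1) (f e.2) - homD E B| ≤
        S.card * c * N ^ (Fintype.card ι) := by
    intro S
    induction S using Finset.induction_on with
    | empty => intro _; simp [homD]
    | insert e S heS ih =>
      intro hS
      have heE : e ∈ E := hS (Finset.mem_insert_self _ _)
      have ih' := ih ((Finset.subset_insert _ _).trans hS)
      have hst := counting_step (fun i j => A i j - B i j) _ hD (E.erase e)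
        (fun e' he' => hE e' (Finset.mem_of_mem_erase he')) e (hE e heE) (Finset.notMem_erase _ _)
        (fun e => if e ∈ S then A else B) (fun e i j => by
          split_ifs
          · exact hA i j
          · exact hB i j)
      have hst' : |∑ f : ι → V, (A (f e.1) (f e.2) - B (f e.1) (f e.2)) *
          ∏ e' ∈ E.erase e, (if e' ∈ S then A else B) (f e'.1) (f e'.2)| ≤
          c * N ^ (Fintype.card ι) := by
        have h2 : 0 < N ^ 2 := by positivity
        have : N ^ 2 * |∑ f : ι → V, (A (f e.1) (f e.2) - B (f e.1) (f e.2)) *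
          ∏ e' ∈ E.erase e, (if e' ∈ S then A else B) (f e'.1) (f e'.2)| ≤
          N ^ 2 * (c * N ^ (Fintype.card ι)) := hst.trans (le_of_eq (by ring))
        exact le_of_mul_le_mul_left this h2
      have e1 : ∑ f : ι → V, ∏ e' ∈ E, (if e' ∈ insert e S then A else B) (f e'.1) (f e'.2)
          - ∑ f : ι → V, ∏ e' ∈ E, (if e' ∈ S then A else B) (f e'.1) (f e'.2)
          = ∑ f : ι → V, (A (f e.1) (f e.2) - B (f e.1) (f e.2)) *
          ∏ e' ∈ E.erase e, (if e' ∈ S then A else B) (f e'.1) (f e'.2) := by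
        rw [← Finset.sum_sub_distrib]
        refine Finset.sum_congr rfl fun f _ => ?_
        rw [← Finset.mul_prod_erase E _ heE, ← Finset.mul_prod_erase E _ heE, sub_mul]
        congr 1
        · rw [if_pos (Finset.mem_insert_self _ _)]
          congr 1
          refine Finset.prod_congr rfl fun e' he' => ?_
          have : e' ≠ e := Finset.ne_of_mem_erase he'
          simp [Finset.mem_insert, this]
        · rw [if_neg heS]
      rw [Finset.card_insert_of_notMem heS]
      have := abs_sub_le (∑ f : ι → V, ∏ e' ∈ E, (if e' ∈ insert e S then A else B) (f e'.1) (f e'.2))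
        (∑ f : ι → V, ∏ e' ∈ E, (if e' ∈ S then A else B) (f e'.1) (f e'.2)) (homD E B)
      rw [e1] at this
      push_cast
      linarith
  have := step E subset_rfl
  convert this using 3
  unfold homD
  refine Finset.sum_congr rfl fun f _ => Finset.prod_congr rfl fun e he => by rw [if_pos he]

/-! ## Matching of labels by a permutation -/

lemma exists_perm_matching {L ι : Type*} [Fintype L] [DecidableEq L] [Fintype ι] [DecidableEq ι]
    (P R : L → ι) :
    ∃ σ : Equiv.Perm L, ((Finset.univ.filter (fun I => P I ≠ R (σ I))).card : ℝ) ≤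
      ∑ a, |((Finset.univ.filter (fun I => P I = a)).card : ℝ) -
        ((Finset.univ.filter (fun I => R I = a)).card : ℝ)| := by
  classical
  obtain ⟨σ, -, hσ⟩ := Finset.exists_min_image (Finset.univ : Finset (Equiv.Perm L))
    (fun σ => (Finset.univ.filter (fun I => P I ≠ R (σ I))).card) ⟨1, Finset.mem_univ _⟩
  refine ⟨σ, ?_⟩
  have key : ∀ I I', P I ≠ R (σ I) → P I' ≠ R (σ I') → P I ≠ R (σ I') := by
    intro I I' h1 h2 h3
    have hne : I ≠ I' := by rintro rfl; exact h1 h3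
    have := hσ (Equiv.swap I I' |>.trans σ) (Finset.mem_univ _)
    refine absurd this (not_le.2 (Finset.card_lt_card ?_))
    rw [Finset.ssubset_iff_of_subset]
    · exact ⟨I, by simpa using h1, fun h => (Finset.mem_filter.1 h).2 (by simpa using h3)⟩
    · intro J hJ
      have hJ := (Finset.mem_filter.1 hJ).2
      rw [Equiv.trans_apply] at hJ
      simp only [Finset.mem_filter, Finset.mem_univ, true_and]
      by_cases hJ1 : J = I
      · rw [hJ1]; exact h1
      by_cases hJ2 : J = I'
      · rw [hJ2]; exact h2
      rwa [Equiv.swap_apply_of_ne_of_ne hJ1 hJ2] at hJ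
  have e1 : ((Finset.univ.filter (fun I => P I ≠ R (σ I))).card : ℝ) =
      ∑ a, (((Finset.univ.filter (fun I => P I ≠ R (σ I))).filter (fun I => P I = a)).card : ℝ) := by
    rw [Finset.card_eq_sum_card_fiberwise (f := P) (t := Finset.univ) (by intro; simp)]
    push_cast
    rfl
  rw [e1]
  refine Finset.sum_le_sum fun a _ => ?_
  have hR : (Finset.univ.filter (fun I => R I = a)).card =
      (Finset.univ.filter (fun I => R (σ I) = a)).card := by
    symm
    refine Finset.card_equiv σ ?_
    simp
  rw [hR]
  have hP : (Finset.univ.filter (fun I => P I = a)).card =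
      (Finset.univ.filter (fun I => P I = a ∧ R (σ I) = a)).card +
      ((Finset.univ.filter (fun I => P I ≠ R (σ I))).filter (fun I => P I = a)).card := by
    rw [← Finset.card_filter_add_card_filter_not (s := Finset.univ.filter (fun I => P I = a))
      (fun I => R (σ I) = a), Finset.filter_filter, Finset.filter_filter, Finset.filter_filter]
    congr 2
    ext I
    simp only [Finset.mem_filter, Finset.mem_univ, true_and]
    constructor
    · rintro ⟨h1, h2⟩; exact ⟨fun h => h2 (by rw [← h, h1]), h1⟩
    · rintro ⟨h1, h2⟩; exact ⟨h2, fun h => h1 (by rw [h, h2])⟩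
  have hR' : (Finset.univ.filter (fun I => R (σ I) = a)).card =
      (Finset.univ.filter (fun I => P I = a ∧ R (σ I) = a)).card +
      ((Finset.univ.filter (fun I => P I ≠ R (σ I))).filter (fun I => R (σ I) = a)).card := by
    rw [← Finset.card_filter_add_card_filter_not (s := Finset.univ.filter (fun I => R (σ I) = a))
      (fun I => P I = a), Finset.filter_filter, Finset.filter_filter, Finset.filter_filter]
    congr 2
    · ext I; simp [and_comm]
    ext I
    simp only [Finset.mem_filter, Finset.mem_univ, true_and]
    constructor
    · rintro ⟨h1, h2⟩; exact ⟨fun h => h2 (by rw [h, h1]), h1⟩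
    · rintro ⟨h1, h2⟩; exact ⟨h2, fun h => h1 (by rw [h, h2])⟩
  rw [hP, hR']
  push_cast
  rw [add_sub_add_left_eq_sub]
  rcases Finset.eq_empty_or_nonempty
    ((Finset.univ.filter (fun I => P I ≠ R (σ I))).filter (fun I => P I = a)) with h | ⟨I, hI⟩
  · rw [h]; simp
  · have : (Finset.univ.filter (fun I => P I ≠ R (σ I))).filter (fun I => R (σ I) = a) = ∅ := by
      rw [Finset.eq_empty_iff_forall_notMem]
      intro I' hI'
      simp only [Finset.mem_filter, Finset.mem_univ, true_and] at hI hI'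
      exact key I I' hI.1 hI'.1 (by rw [hI.2, hI'.2])
    rw [this]
    simp

/-! ## Sampling -/

/-- the ordered pairs -/
def Epairs (k : ℕ) : Finset (Fin k × Fin k) := Finset.univ.filter (fun e => e.1 < e.2)

/-- probability of the edge set `G` for independent edges with probabilities `w`. -/
noncomputable def eprob {k : ℕ} (w : Fin k × Fin k → ℝ) (G : Finset (Fin k × Fin k)) : ℝ :=
  (∏ e ∈ G, w e) * ∏ e ∈ Epairs k \ G, (1 - w e)

/-- adjacency matrix -/
noncomputable def mG {k : ℕ} (G : Finset (Fin k × Fin k)) (i j : Fin k) : ℝ :=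
  if (min i j, max i j) ∈ G then 1 else 0

lemma eprob_nonneg {k : ℕ} (w : Fin k × Fin k → ℝ) (hw : ∀ e, w e ∈ Icc (0:ℝ) 1)
    (G : Finset (Fin k × Fin k)) : 0 ≤ eprob w G :=
  mul_nonneg (Finset.prod_nonneg fun e _ => (hw e).1)
    (Finset.prod_nonneg fun e _ => by linarith [(hw e).2])

lemma eprob_sum {k : ℕ} (w : Fin k × Fin k → ℝ) :
    ∑ G ∈ (Epairs k).powerset, eprob w G = 1 := by
  unfold eprob
  rw [← Finset.prod_add]
  simp

lemma eprob_expect {k : ℕ} (w a : Fin k × Fin k → ℝ) (T : Finset (Fin k × Fin k))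
    (hT : T ⊆ Epairs k) :
    ∑ G ∈ (Epairs k).powerset, eprob w G * ∏ e ∈ T, ((if e ∈ G then 1 else 0) - a e)
      = ∏ e ∈ T, (w e - a e) := by
  have h1 : ∀ G ∈ (Epairs k).powerset,
      eprob w G * ∏ e ∈ T, ((if e ∈ G then 1 else 0) - a e) =
      (∏ e ∈ G, (w e * (if e ∈ T then 1 - a e else 1))) *
      ∏ e ∈ Epairs k \ G, ((1 - w e) * (if e ∈ T then 0 - a e else 1)) := by
    intro G hG
    rw [Finset.mem_powerset] at hG
    have : ∏ e ∈ T, ((if e ∈ G then (1:ℝ) else 0) - a e) =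
        (∏ e ∈ G, (if e ∈ T then 1 - a e else 1)) *
        ∏ e ∈ Epairs k \ G, (if e ∈ T then 0 - a e else 1) := by
      calc ∏ e ∈ T, ((if e ∈ G then (1:ℝ) else 0) - a e)
          = ∏ e ∈ Epairs k, (if e ∈ T then ((if e ∈ G then (1:ℝ) else 0) - a e) else 1) := by
            rw [Finset.prod_ite_mem, Finset.inter_eq_right.2 hT]
        _ = _ := by
            rw [← Finset.prod_sdiff hG, mul_comm]
            congr 1
            · refine Finset.prod_congr rfl fun e he => by rw [if_pos he]
            · refine Finset.prod_congr rfl fun e he => by rw [if_neg (Finset.mem_sdiff.1 he).2]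
    rw [this, eprob, Finset.prod_mul_distrib, Finset.prod_mul_distrib]
    ring
  rw [Finset.sum_congr rfl h1, ← Finset.prod_add]
  rw [← Finset.inter_eq_right.2 hT, ← Finset.prod_ite_mem, Finset.inter_eq_right.2 hT]
  refine Finset.prod_congr rfl fun e _ => ?_
  split_ifs <;> ring

lemma ord_inj {k : ℕ} {i j i' j' : Fin k} (h : (min i j, max i j) = (min i' j', max i' j')) :
    (i = i' ∧ j = j') ∨ (i = j' ∧ j = i') := by
  simp only [Prod.mk.injEq] at h
  obtain ⟨h1, h2⟩ := h
  rcases le_total i j with a | a <;> rcases le_total i' j' with b | b <;>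
    simp_all

lemma expect_quad {k : ℕ} (w : Fin k × Fin k → ℝ) (W A : Fin k → Fin k → ℝ)
    (hw : ∀ i j, w (i, j) = W i j) (hW : ∀ i j, W i j = W j i)
    (hA : ∀ i j, A i j = A j i) (j j' i i' : Fin k) (h1 : j ≠ j') (h2 : j ≠ i) (h3 : j ≠ i')
    (h4 : j' ≠ i) (h5 : j' ≠ i') (h6 : i ≠ i') :
    ∑ G ∈ (Epairs k).powerset, eprob w G *
      ((mG G i j - A i j) * (mG G i j' - A i j') * (mG G i' j - A i' j) * (mG G i' j' - A i' j'))
      = (W i j - A i j) * (W i j' - A i j') * (W i' j - A i' j) * (W i' j' - A i' j') := by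
  have n1 : (min i j, max i j) ≠ (min i j', max i j') := fun h => by
    rcases ord_inj h with h | h <;> simp_all
  have n2 : (min i j, max i j) ≠ (min i' j, max i' j) := fun h => by
    rcases ord_inj h with h | h <;> simp_all
  have n3 : (min i j, max i j) ≠ (min i' j', max i' j') := fun h => by
    rcases ord_inj h with h | h <;> simp_all
  have n4 : (min i j', max i j') ≠ (min i' j, max i' j) := fun h => by
    rcases ord_inj h with h | h <;> simp_all
  have n5 : (min i j', max i j') ≠ (min i' j', max i' j') := fun h => by
    rcases ord_inj h with h | h <;> simp_all
  have n6 : (min i' j, max i' j) ≠ (min i' j', max i' j') := fun h => by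
    rcases ord_inj h with h | h <;> simp_all
  set T : Finset (Fin k × Fin k) := {(min i j, max i j), (min i j', max i j'),
    (min i' j, max i' j), (min i' j', max i' j')} with hTdef
  have hT : T ⊆ Epairs k := by
    intro e he
    simp only [hTdef, Finset.mem_insert, Finset.mem_singleton] at he
    rcases he with rfl | rfl | rfl | rfl <;> simp [Epairs, *, Ne.symm]
  have prodT : ∀ d : Fin k × Fin k → ℝ, ∏ e ∈ T, d e = d (min i j, max i j) *
      d (min i j', max i j') * d (min i' j, max i' j) * d (min i' j', max i' j') := by
    intro d
    rw [hTdef, Finset.prod_insert, Finset.prod_insert, Finset.prod_insert, Finset.prod_singleton]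
    · ring
    · simp only [Finset.mem_singleton]; exact n6
    · simp only [Finset.mem_insert, Finset.mem_singleton, not_or]; exact ⟨n4, n5⟩
    · simp only [Finset.mem_insert, Finset.mem_singleton, not_or]; exact ⟨n1, n2, n3⟩
  have hmm : ∀ (X : Fin k → Fin k → ℝ), (∀ i j, X i j = X j i) → ∀ i j,
      X (min i j) (max i j) = X i j := by
    intro X hX i j
    rcases le_total i j with h | h
    · rw [min_eq_left h, max_eq_right h]
    · rw [min_eq_right h, max_eq_left h, hX]
  have := eprob_expect w (fun e => A e.1 e.2) T hT
  simp only [prodT, hw, hmm A hA, hmm W hW] at this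
  exact this


lemma sum_four {ι V : Type*} [Fintype ι] [DecidableEq ι] [Fintype V]
    (g : V → V → V → V → ℝ) (j j' i i' : ι) (h1 : j ≠ j') (h2 : j ≠ i) (h3 : j ≠ i')
    (h4 : j' ≠ i) (h5 : j' ≠ i') (h6 : i ≠ i') :
    (Fintype.card V : ℝ) ^ 4 * ∑ x : ι → V, g (x j) (x j') (x i) (x i') =
      (Fintype.card V : ℝ) ^ (Fintype.card ι) * ∑ a, ∑ b, ∑ c, ∑ d, g a b c d := by
  have s1 := sum_update i' (fun x : ι → V => g (x j) (x j') (x i) (x i'))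
  have s2 := sum_update i (fun x : ι → V => ∑ d, g (x j) (x j') (x i) d)
  have s3 := sum_update j' (fun x : ι → V => ∑ c, ∑ d, g (x j) (x j') c d)
  have s4 := sum_update j (fun x : ι → V => ∑ b, ∑ c, ∑ d, g (x j) b c d)
  simp only [Function.update_self, Function.update_of_ne h3, Function.update_of_ne h5,
    Function.update_of_ne h6, Function.update_of_ne h2, Function.update_of_ne h4,
    Function.update_of_ne h1] at s1 s2 s3 s4
  rw [s3, s2, s1] at s4
  rw [show (Fintype.card V : ℝ) ^ 4 * ∑ x : ι → V, g (x j) (x j') (x i) (x i') =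
    (Fintype.card V : ℝ) * ((Fintype.card V : ℝ) * ((Fintype.card V : ℝ) *
      ((Fintype.card V : ℝ) * ∑ x : ι → V, g (x j) (x j') (x i) (x i')))) by ring, ← s4]
  simp

lemma abs_mG_sub_le {k : ℕ} (G : Finset (Fin k × Fin k)) (i j : Fin k) (a : ℝ)
    (ha : a ∈ Icc (0:ℝ) 1) : |mG G i j - a| ≤ 1 := by
  unfold mG
  rw [abs_le]
  obtain ⟨h1, h2⟩ := ha
  split_ifs <;> constructor <;> linarith

lemma sample_c4 {V ι : Type*} [Fintype V] (B : V → V → ℝ) (hsym : ∀ i j, B i j = B j i)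
    (hB : ∀ i j, B i j ∈ Icc (0:ℝ) 1) (hV : 0 < Fintype.card V)
    (p : V → ι) (A : ι → ι → ℝ) (hA : ∀ a b, A a b = A b a) (hA1 : ∀ a b, A a b ∈ Icc (0:ℝ) 1)
    (k : ℕ) (ε : ℝ)
    (hc : CutLE (fun i j => B i j - A (p i) (p j)) (ε * (Fintype.card V : ℝ) ^ 2)) :
    ∑ x : Fin k → V, ∑ G ∈ (Epairs k).powerset, eprob (fun e => B (x e.1) (x e.2)) G *
      c4 (fun i j => mG G i j - A (p (x i)) (p (x j))) ≤
    (Fintype.card V : ℝ) ^ k * (4 * ε * (k:ℝ) ^ 4 + 6 * (k:ℝ) ^ 3) := by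
  classical
  set N : ℝ := (Fintype.card V : ℝ) with hN
  have hN0 : 0 < N := by rw [hN]; exact_mod_cast hV
  set C : V → V → ℝ := fun i j => B i j - A (p i) (p j) with hC
  have hc4 : c4 C ≤ 4 * ε * N ^ 4 := by
    refine (c4_le_of_cut C _ hc (fun i j => ?_)).trans (le_of_eq (by ring))
    have h1 := hB i j; have h2 := hA1 (p i) (p j)
    simp only [hC]
    rw [abs_le]; constructor <;> linarith [h1.1, h1.2, h2.1, h2.2]
  have hε : 0 ≤ ε := by
    have := hc.nonneg
    by_contra h
    have h2 : ε * N ^ 2 < 0 := mul_neg_of_neg_of_pos (not_le.1 h) (by positivity)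
    linarith
  have swap : ∑ x : Fin k → V, ∑ G ∈ (Epairs k).powerset, eprob (fun e => B (x e.1) (x e.2)) G *
      c4 (fun i j => mG G i j - A (p (x i)) (p (x j))) =
      ∑ j : Fin k, ∑ j' : Fin k, ∑ i : Fin k, ∑ i' : Fin k, ∑ x : Fin k → V,
        ∑ G ∈ (Epairs k).powerset, eprob (fun e => B (x e.1) (x e.2)) G *
        ((mG G i j - A (p (x i)) (p (x j))) * (mG G i j' - A (p (x i)) (p (x j'))) *
        (mG G i' j - A (p (x i')) (p (x j))) * (mG G i' j' - A (p (x i')) (p (x j')))) := by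
    simp_rw [c4_eq, Finset.mul_sum]
    have sc : ∀ (f : (Fin k → V) → Finset (Fin k × Fin k) → Fin k → ℝ),
        ∑ x : Fin k → V, ∑ G ∈ (Epairs k).powerset, ∑ j, f x G j =
        ∑ j, ∑ x : Fin k → V, ∑ G ∈ (Epairs k).powerset, f x G j := by
      intro f
      symm
      rw [Finset.sum_comm]
      refine Finset.sum_congr rfl fun x _ => ?_
      rw [Finset.sum_comm]
    rw [sc]
    refine Finset.sum_congr rfl fun j _ => ?_
    rw [sc]
    refine Finset.sum_congr rfl fun j' _ => ?_
    rw [sc]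
    refine Finset.sum_congr rfl fun i _ => ?_
    rw [sc]
  rw [swap]
  have key : ∀ j j' i i' : Fin k, ∑ x : Fin k → V,
        ∑ G ∈ (Epairs k).powerset, eprob (fun e => B (x e.1) (x e.2)) G *
        ((mG G i j - A (p (x i)) (p (x j))) * (mG G i j' - A (p (x i)) (p (x j'))) *
        (mG G i' j - A (p (x i')) (p (x j))) * (mG G i' j' - A (p (x i')) (p (x j')))) ≤
      N ^ k * (4 * ε) + N ^ k * ((if j = j' then 1 else 0) + (if j = i then 1 else 0) +
        (if j = i' then 1 else 0) + (if j' = i then 1 else 0) + (if j' = i' then 1 else 0) +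
        (if i = i' then 1 else 0)) := by
    intro j j' i i'
    by_cases hd : j ≠ j' ∧ j ≠ i ∧ j ≠ i' ∧ j' ≠ i ∧ j' ≠ i' ∧ i ≠ i'
    · obtain ⟨h1, h2, h3, h4, h5, h6⟩ := hd
      have e1 : ∀ x : Fin k → V, ∑ G ∈ (Epairs k).powerset, eprob (fun e => B (x e.1) (x e.2)) G *
        ((mG G i j - A (p (x i)) (p (x j))) * (mG G i j' - A (p (x i)) (p (x j'))) *
        (mG G i' j - A (p (x i')) (p (x j))) * (mG G i' j' - A (p (x i')) (p (x j')))) =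
        C (x i) (x j) * C (x i) (x j') * C (x i') (x j) * C (x i') (x j') := fun x =>
          expect_quad _ (fun i j => B (x i) (x j)) (fun i j => A (p (x i)) (p (x j)))
            (fun _ _ => rfl) (fun _ _ => hsym _ _) (fun _ _ => hA _ _) j j' i i' h1 h2 h3 h4 h5 h6
      simp_rw [e1]
      have e2 := sum_four (fun a b c d => C c a * C c b * C d a * C d b) j j' i i' h1 h2 h3 h4 h5 h6
      rw [← c4_eq, Fintype.card_fin, ← hN] at e2
      have e3 : N ^ 4 * ∑ x : Fin k → V, C (x i) (x j) * C (x i) (x j') * C (x i') (x j) * C (x i') (x j')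
          ≤ N ^ 4 * (N ^ k * (4 * ε)) := by
        rw [e2]
        calc N ^ k * c4 C ≤ N ^ k * (4 * ε * N ^ 4) := mul_le_mul_of_nonneg_left hc4 (by positivity)
          _ = _ := by ring
      have e4 := le_of_mul_le_mul_left e3 (by positivity)
      refine e4.trans ?_
      simp [h1, h2, h3, h4, h5, h6]
    · have b1 : ∀ x : Fin k → V, ∑ G ∈ (Epairs k).powerset, eprob (fun e => B (x e.1) (x e.2)) G *
        ((mG G i j - A (p (x i)) (p (x j))) * (mG G i j' - A (p (x i)) (p (x j'))) *
        (mG G i' j - A (p (x i')) (p (x j))) * (mG G i' j' - A (p (x i')) (p (x j')))) ≤ 1 := by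
        intro x
        rw [← eprob_sum (fun e => B (x e.1) (x e.2))]
        refine Finset.sum_le_sum fun G _ => ?_
        refine mul_le_of_le_one_right (eprob_nonneg _ (fun e => hB _ _) G) ?_
        refine (le_abs_self _).trans ?_
        rw [abs_mul, abs_mul, abs_mul]
        have hm : ∀ i j, |mG G i j - A (p (x i)) (p (x j))| ≤ 1 := fun i j =>
          abs_mG_sub_le G i j _ (hA1 _ _)
        refine mul_le_one₀ (mul_le_one₀ (mul_le_one₀ (hm _ _) (abs_nonneg _) (hm _ _))
          (abs_nonneg _) (hm _ _)) (abs_nonneg _) (hm _ _)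
      refine (Finset.sum_le_sum fun x _ => b1 x).trans ?_
      have b2 : (1:ℝ) ≤ ((if j = j' then 1 else 0) + (if j = i then 1 else 0) +
        (if j = i' then 1 else 0) + (if j' = i then 1 else 0) + (if j' = i' then 1 else 0) +
        (if i = i' then 1 else 0)) := by
        have nn : ∀ (q : Prop) [Decidable q], (0:ℝ) ≤ if q then 1 else 0 := fun q _ => by split_ifs <;> simp
        have := nn (j = j'); have := nn (j = i); have := nn (j = i'); have := nn (j' = i)
        have := nn (j' = i'); have := nn (i = i')
        by_contra hlt
        apply hd
        refine ⟨fun h => ?_, fun h => ?_, fun h => ?_, fun h => ?_, fun h => ?_, fun h => ?_⟩ <;>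
        · rw [if_pos h] at hlt
          linarith
      have b3 := mul_le_mul_of_nonneg_left b2 (by positivity : 0 ≤ N ^ k)
      have b4 : 0 ≤ N ^ k * (4 * ε) := by positivity
      simp only [Finset.sum_const, Finset.card_univ, Fintype.card_fun, Fintype.card_fin, nsmul_eq_mul]
      push_cast
      linarith
  refine (Finset.sum_le_sum fun j _ => Finset.sum_le_sum fun j' _ => Finset.sum_le_sum fun i _ =>
    Finset.sum_le_sum fun i' _ => key j j' i i').trans ?_
  simp only [Finset.sum_add_distrib, ← Finset.mul_sum, Finset.sum_const, Finset.card_univ,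
    Fintype.card_fin, nsmul_eq_mul, Finset.sum_ite_eq, Finset.mem_univ, if_true, mul_one, mul_add]
  apply le_of_eq; ring

lemma sample_var {V : Type*} [Fintype V] (hV : 0 < Fintype.card V) (h : V → ℝ)
    (h0 : ∑ v, h v = 0) (h1 : ∀ v, |h v| ≤ 1) (k : ℕ) :
    ∑ x : Fin k → V, (∑ i, h (x i)) ^ 2 ≤ (Fintype.card V : ℝ) ^ k * k := by
  have hN0 : (0:ℝ) < (Fintype.card V : ℝ) := by exact_mod_cast hV
  have e : ∑ x : Fin k → V, (∑ i, h (x i)) ^ 2 = ∑ i, ∑ i', ∑ x : Fin k → V, h (x i) * h (x i') := by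
    simp_rw [sq, Finset.sum_mul_sum]
    rw [Finset.sum_comm]
    refine Finset.sum_congr rfl fun i _ => ?_
    rw [Finset.sum_comm]
  rw [e]
  have key : ∀ i i' : Fin k, ∑ x : Fin k → V, h (x i) * h (x i') ≤
      if i = i' then (Fintype.card V : ℝ) ^ k else 0 := by
    intro i i'
    split_ifs with hii
    · subst hii
      calc _ ≤ ∑ x : Fin k → V, (1:ℝ) := by
            refine Finset.sum_le_sum fun x _ => ?_
            rw [← sq, sq_le_one_iff_abs_le_one]; exact h1 _
        _ = _ := by simp
    · have := sum_update i (fun x : Fin k → V => h (x i) * h (x i'))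
      simp only [Function.update_self, Function.update_of_ne (Ne.symm hii), ← Finset.sum_mul, h0,
        zero_mul, Finset.sum_const_zero] at this
      rcases mul_eq_zero.1 this.symm with h | h
      · exact absurd h hN0.ne'
      · exact h.le
  refine (Finset.sum_le_sum fun i _ => Finset.sum_le_sum fun i' _ => key i i').trans ?_
  simp [mul_comm]


/-- `G` is (after blowing up and permuting) close to `B`. -/
def GoodG {V : Type*} [Fintype V] {k : ℕ} (B : V → V → ℝ) (G : Finset (Fin k × Fin k)) (δ : ℝ) :
    Prop :=
  ∃ σ : Equiv.Perm (V × Fin k), CutLE (fun I J : V × Fin k => B I.1 J.1 - mG G (σ I).2 (σ J).2)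
    (δ * ((Fintype.card V : ℝ) * k) ^ 2)

lemma good_of_sample {V ι : Type*} [Fintype V] [DecidableEq V] [Fintype ι] [DecidableEq ι]
    (B : V → V → ℝ) (hV : 0 < Fintype.card V)
    (p : V → ι) (A : ι → ι → ℝ) (hA1 : ∀ a b, A a b ∈ Icc (0:ℝ) 1)
    (k : ℕ) (hk : 0 < k) (ε δ : ℝ) (hδ : 0 ≤ δ)
    (hc : CutLE (fun i j => B i j - A (p i) (p j)) (ε * (Fintype.card V : ℝ) ^ 2))
    (G : Finset (Fin k × Fin k)) (x : Fin k → V)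
    (h4 : c4 (fun i j => mG G i j - A (p (x i)) (p (x j))) ≤ δ ^ 4 * (k:ℝ) ^ 4)
    (hv : ∑ a, |((Finset.univ.filter (fun i => p (x i) = a)).card : ℝ) -
      k * (((Finset.univ.filter (fun v => p v = a)).card : ℝ) / (Fintype.card V : ℝ))| ≤ δ * k) :
    GoodG B G (ε + 3 * δ) := by
  set N : ℝ := (Fintype.card V : ℝ) with hN
  have hN0 : 0 < N := by rw [hN]; exact_mod_cast hV
  obtain ⟨σ, hσ⟩ := exists_perm_matching (fun I : V × Fin k => p I.1) (fun I => p (x I.2))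
  have c1 : ∀ a, (Finset.univ.filter (fun I : V × Fin k => p I.1 = a)).card =
      (Finset.univ.filter (fun v => p v = a)).card * k := by
    intro a
    have : Finset.univ.filter (fun I : V × Fin k => p I.1 = a) =
      (Finset.univ.filter (fun v => p v = a)) ×ˢ (Finset.univ : Finset (Fin k)) := by
      ext I; simp
    rw [this, Finset.card_product]; simp
  have c2 : ∀ a, (Finset.univ.filter (fun I : V × Fin k => p (x I.2) = a)).card =
      Fintype.card V * (Finset.univ.filter (fun i => p (x i) = a)).card := by
    intro a
    have : Finset.univ.filter (fun I : V × Fin k => p (x I.2) = a) =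
      (Finset.univ : Finset V) ×ˢ (Finset.univ.filter (fun i => p (x i) = a)) := by
      ext I; simp
    rw [this, Finset.card_product]; simp
  set bad := Finset.univ.filter (fun I : V × Fin k => p I.1 ≠ p (x (σ I).2)) with hbad
  have hbc : (bad.card : ℝ) ≤ δ * (N * k) := by
    refine hσ.trans ?_
    calc _ = ∑ a, N * |((Finset.univ.filter (fun i => p (x i) = a)).card : ℝ) -
          k * (((Finset.univ.filter (fun v => p v = a)).card : ℝ) / N)| := by
          refine Finset.sum_congr rfl fun a _ => ?_
          rw [c1, c2, ← abs_of_pos hN0, ← abs_mul, abs_of_pos hN0, abs_sub_comm]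
          congr 1
          push_cast
          field_simp
          rw [hN]
          ring
      _ ≤ N * (δ * k) := by
          rw [← Finset.mul_sum]
          exact mul_le_mul_of_nonneg_left hv hN0.le
      _ = _ := by ring
  refine ⟨σ, ?_⟩
  have p1 : CutLE (fun I J : V × Fin k => B I.1 J.1 - A (p I.1) (p J.1)) ((k:ℝ) ^ 2 * (ε * N ^ 2)) := by
    refine hc.pullback (fun I : V × Fin k => I.1) k hk (fun v => ?_)
    have : Finset.univ.filter (fun I : V × Fin k => I.1 = v) =
      {v} ×ˢ (Finset.univ : Finset (Fin k)) := by
      ext I; rw [Finset.mem_product]; simp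
    rw [this, Finset.card_product]; simp
  have p3 : CutLE (fun I J : V × Fin k => mG G I.2 J.2 - A (p (x I.2)) (p (x J.2)))
      ((Fintype.card V : ℝ) ^ 2 * (δ * (k:ℝ) ^ 2)) := by
    have := CutLE.of_c4 (fun i j => mG G i j - A (p (x i)) (p (x j))) δ hδ (by simpa using h4)
    rw [Fintype.card_fin] at this
    refine this.pullback (fun I : V × Fin k => I.2) _ hV (fun v => ?_)
    have : Finset.univ.filter (fun I : V × Fin k => I.2 = v) =
      (Finset.univ : Finset V) ×ˢ {v} := by
      ext I; rw [Finset.mem_product]; simp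
    rw [this, Finset.card_product]; simp
  have p2 : CutLE (fun I J : V × Fin k => A (p I.1) (p J.1) -
      A (p (x (σ I).2)) (p (x (σ J).2))) (2 * δ * (N * k) ^ 2) := by
    apply CutLE.of_l1
    have hb : ∀ I J : V × Fin k, |A (p I.1) (p J.1) - A (p (x (σ I).2)) (p (x (σ J).2))| ≤
        (if I ∈ bad then 1 else 0) + (if J ∈ bad then 1 else 0) := by
      intro I J
      have g1 := hA1 (p I.1) (p J.1)
      have g2 := hA1 (p (x (σ I).2)) (p (x (σ J).2))
      have g3 : |A (p I.1) (p J.1) - A (p (x (σ I).2)) (p (x (σ J).2))| ≤ 1 := by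
        rw [abs_le]; constructor <;> linarith [g1.1, g1.2, g2.1, g2.2]
      by_cases hI : I ∈ bad
      · rw [if_pos hI]; split_ifs <;> linarith
      · by_cases hJ : J ∈ bad
        · rw [if_pos hJ, if_neg hI]; linarith
        · rw [if_neg hI, if_neg hJ]
          simp only [hbad, Finset.mem_filter, Finset.mem_univ, true_and, not_not] at hI hJ
          rw [hI, hJ]; simp
    refine (Finset.sum_le_sum fun I _ => Finset.sum_le_sum fun J _ => hb I J).trans ?_
    simp only [Finset.sum_add_distrib, Finset.sum_const, Finset.card_univ, Fintype.card_prod,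
      Fintype.card_fin, nsmul_eq_mul, Finset.sum_ite_mem, Finset.univ_inter, mul_one]
    rw [← Finset.mul_sum]
    simp only [Finset.sum_ite_mem, Finset.univ_inter, Finset.sum_const, nsmul_eq_mul, mul_one]
    push_cast
    rw [← hN]
    have : 0 ≤ N * k := by positivity
    nlinarith
  have := (p1.add p2).add (p3.comp_equiv σ).neg
  refine CutLE.mono ?_ (le_of_eq (?_ : (k:ℝ) ^ 2 * (ε * N ^ 2) + 2 * δ * (N * k) ^ 2 +
    (Fintype.card V : ℝ) ^ 2 * (δ * (k:ℝ) ^ 2) = _))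
  · convert this using 3
    ring
  · rw [← hN]; ring

open Classical in
lemma good_prob (δ : ℝ) (hδ : 0 < δ) : ∃ k : ℕ, 0 < k ∧ ∀ (V : Type) [Fintype V],
    0 < Fintype.card V → ∀ B : V → V → ℝ, (∀ i j, B i j = B j i) →
      (∀ i j, B i j ∈ Icc (0:ℝ) 1) →
      ∑ G ∈ (Epairs k).powerset.filter (fun G => ¬ GoodG B G δ),
        ∑ x : Fin k → V, eprob (fun e => B (x e.1) (x e.2)) G ≤ (Fintype.card V : ℝ) ^ k / 4 := by
  set d : ℝ := δ / 4 with hd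
  have hd0 : 0 < d := by positivity
  set ε : ℝ := min d (d ^ 4 / 64) with hε
  have hε0 : 0 < ε := lt_min hd0 (by positivity)
  obtain ⟨J, hJ⟩ := exists_nat_gt (1 / ε ^ 2)
  have hJ' : 1 < J * ε ^ 2 := by rwa [div_lt_iff₀ (by positivity)] at hJ
  set M : ℝ := (4:ℝ) ^ J with hM
  have hM0 : 0 < M := by positivity
  obtain ⟨k, hk⟩ := exists_nat_gt (96 / d ^ 4 + 8 * M ^ 2 / d ^ 2)
  have hkpos : (0:ℝ) < k := lt_of_le_of_lt (by positivity) hk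
  have hk1 : 96 ≤ d ^ 4 * k := by
    have : 96 / d ^ 4 ≤ k := le_trans (le_add_of_nonneg_right (by positivity)) hk.le
    rw [div_le_iff₀ (by positivity)] at this; linarith
  have hk2 : 8 * M ^ 2 ≤ d ^ 2 * k := by
    have : 8 * M ^ 2 / d ^ 2 ≤ k := le_trans (le_add_of_nonneg_left (by positivity)) hk.le
    rw [div_le_iff₀ (by positivity)] at this; linarith
  refine ⟨k, by exact_mod_cast hkpos, ?_⟩
  intro V _ hV B hsym hB
  obtain ⟨ι, _, p, A, hι, hA, hA1, hc⟩ := weak_reg B hsym hB hV ε hε0 J hJ'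
  set N : ℝ := (Fintype.card V : ℝ) with hN
  have hN0 : 0 < N := by rw [hN]; exact_mod_cast hV
  have hιM : (Fintype.card ι : ℝ) ≤ M := by rw [hM]; exact_mod_cast hι
  set lam : ι → ℝ := fun a => ((Finset.univ.filter (fun v => p v = a)).card : ℝ) / N with hlam
  set cnt : (Fin k → V) → ι → ℝ := fun x a =>
    ((Finset.univ.filter (fun i => p (x i) = a)).card : ℝ) with hcnt
  set Q : (Fin k → V) → ℝ := fun x => ∑ a, (cnt x a - k * lam a) ^ 2 with hQ
  set C : (Fin k → V) → Finset (Fin k × Fin k) → ℝ := fun x G =>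
    c4 (fun i j => mG G i j - A (p (x i)) (p (x j))) with hC
  have hQsum : ∑ x, Q x ≤ N ^ k * (M * k) := by
    simp only [hQ]
    rw [Finset.sum_comm]
    have : ∀ a, ∑ x : Fin k → V, (cnt x a - k * lam a) ^ 2 ≤ N ^ k * k := by
      intro a
      have hl1 : lam a ≤ 1 := by
        simp only [hlam]
        rw [div_le_one hN0, hN]
        exact_mod_cast Finset.card_le_univ _
      have hl0 : 0 ≤ lam a := by simp only [hlam]; positivity
      have := sample_var hV (fun v => (if p v = a then 1 else 0) - lam a) (by
        rw [Finset.sum_sub_distrib, Finset.sum_boole, Finset.sum_const, Finset.card_univ,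
          nsmul_eq_mul, ← hN]
        simp only [hlam]
        field_simp
        ring) (fun v => by
          rw [abs_le]; split_ifs <;> constructor <;> linarith) k
      refine le_trans (le_of_eq ?_) this
      refine Finset.sum_congr rfl fun x _ => ?_
      rw [Finset.sum_sub_distrib, Finset.sum_boole]
      simp [hcnt]
    refine (Finset.sum_le_sum fun a _ => this a).trans ?_
    rw [Finset.sum_const, Finset.card_univ, nsmul_eq_mul]
    have h0 : 0 ≤ N ^ k * k := by positivity
    nlinarith
  have hCsum := sample_c4 B hsym hB hV p A hA hA1 k ε hc
  have hgood : ∀ x G, ¬ GoodG B G δ →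
      1 ≤ C x G / (d ^ 4 * (k:ℝ) ^ 4) + Q x * (M / (d ^ 2 * (k:ℝ) ^ 2)) := by
    intro x G hG
    by_contra hlt
    rw [not_le] at hlt
    apply hG
    have hC0 : 0 ≤ C x G := c4_nonneg _
    have hQ0 : 0 ≤ Q x := Finset.sum_nonneg fun _ _ => sq_nonneg _
    have i1 : 0 ≤ C x G / (d ^ 4 * (k:ℝ) ^ 4) := by positivity
    have i2 : 0 ≤ Q x * (M / (d ^ 2 * (k:ℝ) ^ 2)) := by positivity
    have j1 : C x G ≤ d ^ 4 * (k:ℝ) ^ 4 := by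
      have : C x G / (d ^ 4 * (k:ℝ) ^ 4) ≤ 1 := by linarith
      rwa [div_le_one (by positivity)] at this
    have j2 : M * Q x ≤ d ^ 2 * (k:ℝ) ^ 2 := by
      have : Q x * (M / (d ^ 2 * (k:ℝ) ^ 2)) ≤ 1 := by linarith
      rw [← mul_div_assoc, div_le_one (by positivity)] at this
      linarith
    have j3 : ∑ a, |cnt x a - k * lam a| ≤ d * k := by
      have cs := Finset.sum_mul_sq_le_sq_mul_sq (Finset.univ : Finset ι) (fun _ => (1:ℝ))
        (fun a => |cnt x a - k * lam a|)
      simp only [one_mul, one_pow, Finset.sum_const, Finset.card_univ, nsmul_eq_mul, mul_one,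
        sq_abs] at cs
      refine le_of_sq_le_sq ?_ (by positivity)
      refine cs.trans ?_
      calc (Fintype.card ι : ℝ) * Q x ≤ M * Q x := mul_le_mul_of_nonneg_right hιM hQ0
        _ ≤ _ := by rw [mul_pow]; exact j2
    have hgs := good_of_sample B hV p A hA1 k (by exact_mod_cast hkpos) ε d hd0.le hc G x j1 j3
    obtain ⟨σ, hσ⟩ := hgs
    refine ⟨σ, hσ.mono (mul_le_mul_of_nonneg_right ?_ (by positivity))⟩
    have : ε ≤ d := min_le_left _ _
    linarith
  have hp0 : ∀ (x : Fin k → V) G, 0 ≤ eprob (fun e => B (x e.1) (x e.2)) G := fun x G =>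
    eprob_nonneg _ (fun e => hB _ _) G
  have hnn : ∀ x G, 0 ≤ C x G / (d ^ 4 * (k:ℝ) ^ 4) + Q x * (M / (d ^ 2 * (k:ℝ) ^ 2)) := by
    intro x G
    have hC0 : 0 ≤ C x G := c4_nonneg _
    have hQ0 : 0 ≤ Q x := Finset.sum_nonneg fun _ _ => sq_nonneg _
    positivity
  calc ∑ G ∈ (Epairs k).powerset.filter (fun G => ¬ GoodG B G δ),
        ∑ x : Fin k → V, eprob (fun e => B (x e.1) (x e.2)) G
      ≤ ∑ G ∈ (Epairs k).powerset.filter (fun G => ¬ GoodG B G δ),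
        ∑ x : Fin k → V, eprob (fun e => B (x e.1) (x e.2)) G *
          (C x G / (d ^ 4 * (k:ℝ) ^ 4) + Q x * (M / (d ^ 2 * (k:ℝ) ^ 2))) := by
        refine Finset.sum_le_sum fun G hG => Finset.sum_le_sum fun x _ => ?_
        exact le_mul_of_one_le_right (hp0 x G) (hgood x G (Finset.mem_filter.1 hG).2)
    _ ≤ ∑ G ∈ (Epairs k).powerset, ∑ x : Fin k → V, eprob (fun e => B (x e.1) (x e.2)) G *
          (C x G / (d ^ 4 * (k:ℝ) ^ 4) + Q x * (M / (d ^ 2 * (k:ℝ) ^ 2))) :=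
        Finset.sum_le_sum_of_subset_of_nonneg (Finset.filter_subset _ _) fun G _ _ =>
          Finset.sum_nonneg fun x _ => mul_nonneg (hp0 x G) (hnn x G)
    _ = (∑ x : Fin k → V, ∑ G ∈ (Epairs k).powerset, eprob (fun e => B (x e.1) (x e.2)) G * C x G)
          / (d ^ 4 * (k:ℝ) ^ 4) + (∑ x, Q x) * (M / (d ^ 2 * (k:ℝ) ^ 2)) := by
        rw [Finset.sum_comm, Finset.sum_div, Finset.sum_mul, ← Finset.sum_add_distrib]
        refine Finset.sum_congr rfl fun x _ => ?_
        simp_rw [mul_add, Finset.sum_add_distrib]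
        rw [← Finset.sum_mul, eprob_sum, one_mul, Finset.sum_div]
        congr 1
        refine Finset.sum_congr rfl fun G _ => by ring
    _ ≤ (N ^ k * (4 * ε * (k:ℝ) ^ 4 + 6 * (k:ℝ) ^ 3)) / (d ^ 4 * (k:ℝ) ^ 4)
          + (N ^ k * (M * k)) * (M / (d ^ 2 * (k:ℝ) ^ 2)) := by
        gcongr
    _ = N ^ k * (4 * ε / d ^ 4 + 6 / (d ^ 4 * k) + M ^ 2 / (d ^ 2 * k)) := by
        field_simp
    _ ≤ N ^ k * (1 / 16 + 1 / 16 + 1 / 8) := by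
        refine mul_le_mul_of_nonneg_left ?_ (by positivity)
        have t1 : 4 * ε / d ^ 4 ≤ 1 / 16 := by
          rw [div_le_iff₀ (by positivity)]
          have : ε ≤ d ^ 4 / 64 := min_le_right _ _
          linarith
        have t2 : 6 / (d ^ 4 * k) ≤ 1 / 16 := by
          rw [div_le_iff₀ (by positivity)]; linarith
        have t3 : M ^ 2 / (d ^ 2 * k) ≤ 1 / 8 := by
          rw [div_le_iff₀ (by positivity)]; linarith
        linarith
    _ = N ^ k / 4 := by ring


lemma sum_eprob_eq {V : Type*} [Fintype V] {k : ℕ} (B : V → V → ℝ) (G : Finset (Fin k × Fin k)) :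
    ∑ x : Fin k → V, eprob (fun e => B (x e.1) (x e.2)) G =
      ∑ T ∈ (Epairs k \ G).powerset, (-1) ^ T.card * homD (G ∪ T) B := by
  unfold homD
  simp_rw [Finset.mul_sum]
  rw [Finset.sum_comm]
  refine Finset.sum_congr rfl fun x _ => ?_
  unfold eprob
  have : ∀ e : Fin k × Fin k, 1 - B (x e.1) (x e.2) = - B (x e.1) (x e.2) + 1 := fun e => by ring
  simp_rw [this]
  rw [Finset.prod_add, Finset.mul_sum]
  refine Finset.sum_congr rfl fun T hT => ?_
  have hd : Disjoint G T := by
    rw [Finset.mem_powerset] at hT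
    exact Finset.disjoint_of_subset_right hT Finset.disjoint_sdiff
  rw [Finset.prod_union hd, Finset.prod_neg]
  simp
  ring

lemma inverse_disc (ε : ℝ) (hε : 0 < ε) : ∃ k : ℕ, 0 < k ∧ ∃ η : ℝ, 0 < η ∧
    ∀ (V : Type) [Fintype V], 0 < Fintype.card V → ∀ B₁ B₂ : V → V → ℝ,
      (∀ i j, B₁ i j = B₁ j i) → (∀ i j, B₁ i j ∈ Icc (0:ℝ) 1) →
      (∀ i j, B₂ i j = B₂ j i) → (∀ i j, B₂ i j ∈ Icc (0:ℝ) 1) →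
      (∀ E ⊆ Epairs k, |homD E B₁ - homD E B₂| ≤ η * (Fintype.card V : ℝ) ^ k) →
      ∃ σ : Equiv.Perm (V × Fin k), CutLE (fun I J => B₁ I.1 J.1 - B₂ (σ I).1 (σ J).1)
        (ε * ((Fintype.card V : ℝ) * k) ^ 2) := by
  classical
  obtain ⟨k, hk, H⟩ := good_prob (ε / 2) (by positivity)
  set c := (Epairs k).card with hc
  refine ⟨k, hk, 1 / (4 * 4 ^ c), by positivity, ?_⟩
  intro V _ hV B₁ B₂ s₁ r₁ s₂ r₂ hE
  have H₁ := H V hV B₁ s₁ r₁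
  have H₂ := H V hV B₂ s₂ r₂
  set N : ℝ := (Fintype.card V : ℝ) with hN
  have hN0 : 0 < N := by rw [hN]; exact_mod_cast hV
  set P : (V → V → ℝ) → Finset (Fin k × Fin k) → ℝ := fun B G =>
    ∑ x : Fin k → V, eprob (fun e => B (x e.1) (x e.2)) G with hP
  have hPnn : ∀ G, 0 ≤ P B₁ G := fun G => Finset.sum_nonneg fun x _ =>
    eprob_nonneg _ (fun e => r₁ _ _) G
  have hdiff : ∀ G ∈ (Epairs k).powerset, |P B₁ G - P B₂ G| ≤ 2 ^ c * (1 / (4 * 4 ^ c) * N ^ k) := by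
    intro G hG
    rw [Finset.mem_powerset] at hG
    simp only [hP]
    rw [sum_eprob_eq, sum_eprob_eq, ← Finset.sum_sub_distrib]
    refine (Finset.abs_sum_le_sum_abs _ _).trans ?_
    have : ∀ T ∈ (Epairs k \ G).powerset,
        |(-1) ^ T.card * homD (G ∪ T) B₁ - (-1) ^ T.card * homD (G ∪ T) B₂| ≤
          1 / (4 * 4 ^ c) * N ^ k := by
      intro T hT
      rw [Finset.mem_powerset] at hT
      rw [← mul_sub, abs_mul, abs_pow, abs_neg, abs_one, one_pow, one_mul]
      exact hE _ (Finset.union_subset hG (hT.trans Finset.sdiff_subset))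
    refine (Finset.sum_le_sum this).trans ?_
    rw [Finset.sum_const, nsmul_eq_mul, Finset.card_powerset]
    refine mul_le_mul_of_nonneg_right ?_ (by positivity)
    push_cast
    exact pow_le_pow_right₀ (by norm_num) (Finset.card_le_card Finset.sdiff_subset)
  have htot : ∑ G ∈ (Epairs k).powerset, P B₁ G = N ^ k := by
    simp only [hP]
    rw [Finset.sum_comm]
    simp_rw [eprob_sum]
    simp [hN]
  obtain ⟨G, hG, hG1, hG2⟩ : ∃ G ∈ (Epairs k).powerset, GoodG B₁ G (ε / 2) ∧ GoodG B₂ G (ε / 2) := by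
    by_contra hno
    push Not at hno
    have hdsum : ∑ G ∈ (Epairs k).powerset, |P B₁ G - P B₂ G| ≤ N ^ k / 4 := by
      refine (Finset.sum_le_sum hdiff).trans ?_
      rw [Finset.sum_const, nsmul_eq_mul, Finset.card_powerset, ← hc]
      push_cast
      apply le_of_eq
      rw [show (4:ℝ) ^ c = 2 ^ c * 2 ^ c by rw [← mul_pow]; norm_num]
      field_simp
    have h3 : ∑ G ∈ (Epairs k).powerset.filter (fun G => ¬ GoodG B₂ G (ε / 2)), P B₁ G ≤
        N ^ k / 4 + N ^ k / 4 := by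
      calc _ ≤ ∑ G ∈ (Epairs k).powerset.filter (fun G => ¬ GoodG B₂ G (ε / 2)),
            (P B₂ G + |P B₁ G - P B₂ G|) :=
            Finset.sum_le_sum fun G _ => by linarith [le_abs_self (P B₁ G - P B₂ G)]
        _ = ∑ G ∈ (Epairs k).powerset.filter (fun G => ¬ GoodG B₂ G (ε / 2)), P B₂ G +
            ∑ G ∈ (Epairs k).powerset.filter (fun G => ¬ GoodG B₂ G (ε / 2)), |P B₁ G - P B₂ G| :=
            Finset.sum_add_distrib
        _ ≤ N ^ k / 4 + ∑ G ∈ (Epairs k).powerset, |P B₁ G - P B₂ G| :=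
            add_le_add H₂ (Finset.sum_le_sum_of_subset_of_nonneg (Finset.filter_subset _ _)
              fun _ _ _ => abs_nonneg _)
        _ ≤ _ := by linarith
    have h4 : ∑ G ∈ (Epairs k).powerset, P B₁ G ≤
        ∑ G ∈ (Epairs k).powerset.filter (fun G => ¬ GoodG B₁ G (ε / 2)), P B₁ G +
        ∑ G ∈ (Epairs k).powerset.filter (fun G => ¬ GoodG B₂ G (ε / 2)), P B₁ G := by
      rw [Finset.sum_filter, Finset.sum_filter, ← Finset.sum_add_distrib]
      refine Finset.sum_le_sum fun G hG => ?_
      by_cases g1 : GoodG B₁ G (ε / 2)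
      · simp [hno G hG g1, g1]
      · rw [if_pos g1]
        have := hPnn G
        split_ifs <;> linarith
    have h5 : 0 < N ^ k := by positivity
    rw [htot] at h4
    have h6 : ∑ G ∈ (Epairs k).powerset.filter (fun G => ¬ GoodG B₁ G (ε / 2)), P B₁ G ≤ N ^ k / 4 :=
      H₁
    linarith
  obtain ⟨σ₁, h₁⟩ := hG1
  obtain ⟨σ₂, h₂⟩ := hG2
  refine ⟨σ₁.trans σ₂.symm, ?_⟩
  have := h₁.add (h₂.comp_equiv (σ₁.trans σ₂.symm)).neg
  refine CutLE.mono ?_ (le_of_eq (?_ : ε / 2 * (N * k) ^ 2 + ε / 2 * (N * k) ^ 2 = _))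
  · convert this using 3
    simp
  · ring

instance : IsProbabilityMeasure μ01 := by
  constructor
  simp [μ01]

/-- Index of the interval of length `1/N` containing `x`. -/
noncomputable def qn (N : ℕ) (x : ℝ) : ℕ := min ⌊(N:ℝ) * x⌋₊ (N - 1)

theorem qn_lt (N : ℕ) [NeZero N] (x : ℝ) : qn N x < N := by
  have := NeZero.pos N
  unfold qn
  omega

noncomputable def qq (N : ℕ) [NeZero N] (x : ℝ) : Fin N := ⟨qn N x, qn_lt N x⟩

theorem measurable_qn (N : ℕ) : Measurable (qn N) := by
  unfold qn
  exact (Nat.measurable_floor.comp (measurable_const.mul measurable_id)).min measurable_const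

theorem measurable_qq (N : ℕ) [NeZero N] : Measurable (qq N) := by
  refine measurable_to_countable' fun i => ?_
  have : qq N ⁻¹' {i} = qn N ⁻¹' {(i:ℕ)} := by
    ext x; simp [qq, Fin.ext_iff]
  rw [this]
  exact measurable_qn N (measurableSet_singleton _)

theorem qn_refine (N k : ℕ) [NeZero N] [NeZero k] (x : ℝ) : qn (N * k) x / k = qn N x := by
  have hk := NeZero.pos k
  have hN := NeZero.pos N
  unfold qn
  have hmono : Monotone (fun a : ℕ => a / k) := fun a b h => Nat.div_le_div_right h
  have h1 : (min ⌊((N * k : ℕ):ℝ) * x⌋₊ (N * k - 1)) / k =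
      min (⌊((N * k : ℕ):ℝ) * x⌋₊ / k) ((N * k - 1) / k) := hmono.map_min
  rw [h1, ← Nat.floor_div_natCast]
  congr 1
  · congr 1
    push_cast
    field_simp
  · rw [Nat.div_eq_iff hk]
    obtain ⟨M, rfl⟩ : ∃ M, N = M + 1 := ⟨N - 1, by omega⟩
    simp only [Nat.add_sub_cancel]
    constructor
    · rw [Nat.add_mul]; omega
    · rw [Nat.add_mul]; omega

theorem qn_of_mem {N : ℕ} [NeZero N] {i : ℕ} (hi : i < N) {x : ℝ}
    (hx : x ∈ Ico ((i:ℝ) / N) ((i + 1 : ℝ) / N)) : qn N x = i := by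
  have hN : (0:ℝ) < N := by exact_mod_cast NeZero.pos N
  unfold qn
  have : ⌊(N:ℝ) * x⌋₊ = i := by
    rw [Nat.floor_eq_iff]
    · constructor
      · have := hx.1; rw [div_le_iff₀ hN] at this; linarith
      · have := hx.2; rw [lt_div_iff₀ hN] at this; linarith
    · have : (0:ℝ) ≤ x := le_trans (by positivity) hx.1
      positivity
  rw [this]; omega

theorem mem_of_qn {N : ℕ} [NeZero N] {x : ℝ} (hx : x ∈ Ico (0:ℝ) 1) :
    x ∈ Ico ((qn N x:ℝ) / N) ((qn N x + 1 : ℝ) / N) := by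
  have hN : (0:ℝ) < N := by exact_mod_cast NeZero.pos N
  have h0 : 0 ≤ (N:ℝ) * x := mul_nonneg hN.le hx.1
  have hlt : ⌊(N:ℝ) * x⌋₊ < N := by
    rw [Nat.floor_lt h0]
    nlinarith [hx.2]
  have : qn N x = ⌊(N:ℝ) * x⌋₊ := by unfold qn; omega
  rw [this]
  constructor
  · rw [div_le_iff₀ hN]; have := Nat.floor_le h0; linarith
  · rw [lt_div_iff₀ hN]; have := Nat.lt_floor_add_one ((N:ℝ) * x); linarith

theorem ae_mem_Ico : ∀ᵐ x ∂μ01, x ∈ Ico (0:ℝ) 1 := by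
  have h1 : ∀ᵐ x ∂μ01, x ∈ Icc (0:ℝ) 1 := ae_restrict_mem measurableSet_Icc
  have h2 : ∀ᵐ x ∂μ01, x ≠ (1:ℝ) := by
    apply ae_restrict_of_ae
    exact Measure.ae_ne volume 1
  filter_upwards [h1, h2] with x a b
  exact ⟨a.1, lt_of_le_of_ne a.2 b⟩

theorem Ico_cell_subset {N : ℕ} [NeZero N] {i : ℕ} (hi : i < N) :
    Ico ((i:ℝ) / N) ((i + 1 : ℝ) / N) ⊆ Ico (0:ℝ) 1 := by
  have hN : (0:ℝ) < N := by exact_mod_cast NeZero.pos N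
  intro x hx
  refine ⟨le_trans (by positivity) hx.1, lt_of_lt_of_le hx.2 ?_⟩
  rw [div_le_one hN]
  exact_mod_cast hi

theorem fibre_ae (N : ℕ) [NeZero N] (i : Fin N) :
    (qq N ⁻¹' {i} : Set ℝ) =ᵐ[μ01] Ico ((i:ℝ) / N) ((i + 1 : ℝ) / N) := by
  filter_upwards [ae_mem_Ico] with x hx
  apply propext
  constructor
  · intro h
    have h' : qq N x = i := h
    have := mem_of_qn (N := N) hx
    rw [← h']; exact this
  · intro h
    have := qn_of_mem i.2 h
    exact Fin.ext this

theorem fibre_meas (N : ℕ) [NeZero N] (i : Fin N) :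
    μ01.real (qq N ⁻¹' {i}) = 1 / N := by
  have hN : (0:ℝ) < N := by exact_mod_cast NeZero.pos N
  rw [measureReal_congr (fibre_ae N i), measureReal_restrict_apply measurableSet_Ico,
    inter_eq_left.2 ((Ico_cell_subset i.2).trans Ico_subset_Icc_self)]
  rw [Real.volume_real_Ico_of_le]
  · field_simp; ring
  · gcongr; linarith

theorem map_qq_real (N : ℕ) [NeZero N] (i : Fin N) :
    (μ01.map (qq N)).real {i} = 1 / N := by
  rw [map_measureReal_apply (measurable_qq N) (measurableSet_singleton _), fibre_meas]

theorem integral_qq (N : ℕ) [NeZero N] (g : Fin N → ℝ) :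
    ∫ x, g (qq N x) ∂μ01 = (∑ i, g i) / N := by
  have : IsProbabilityMeasure (μ01.map (qq N)) :=
    Measure.isProbabilityMeasure_map (measurable_qq N).aemeasurable
  rw [← integral_map (φ := qq N) (f := g) (measurable_qq N).aemeasurable
    (measurable_of_countable g).aestronglyMeasurable]
  rw [integral_fintype (Integrable.of_finite)]
  simp only [map_qq_real, smul_eq_mul]
  rw [← Finset.mul_sum]; ring

theorem integral_qq_pi (N m : ℕ) [NeZero N] (g : (Fin m → Fin N) → ℝ) :
    ∫ x, g (fun i => qq N (x i)) ∂(Measure.pi fun _ : Fin m => μ01)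
      = (∑ f, g f) / (N:ℝ) ^ m := by
  have hp : IsProbabilityMeasure (μ01.map (qq N)) :=
    Measure.isProbabilityMeasure_map (measurable_qq N).aemeasurable
  have hm : Measurable (fun (x : Fin m → ℝ) (i : Fin m) => qq N (x i)) :=
    measurable_pi_lambda _ fun i => (measurable_qq N).comp (measurable_pi_apply i)
  have hmap : (Measure.pi fun _ : Fin m => μ01).map (fun x i => qq N (x i))
      = Measure.pi (fun _ : Fin m => μ01.map (qq N)) :=
    Measure.pi_map_pi (fun i => (measurable_qq N).aemeasurable)
  rw [← integral_map (φ := fun (x : Fin m → ℝ) (i : Fin m) => qq N (x i)) (f := g) hm.aemeasurable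
    (measurable_of_countable g).aestronglyMeasurable, hmap]
  rw [integral_fintype (Integrable.of_finite)]
  have : ∀ f : Fin m → Fin N, (Measure.pi (fun _ : Fin m => μ01.map (qq N))).real {f}
      = 1 / (N:ℝ) ^ m := by
    intro f
    rw [measureReal_def, Measure.pi_singleton, ENNReal.toReal_prod]
    have : ∀ i, ((μ01.map (qq N)) {f i}).toReal = 1 / N := fun i => map_qq_real N (f i)
    simp [this]
  simp only [this, smul_eq_mul]
  rw [← Finset.mul_sum]; ring

noncomputable def stp {N : ℕ} [NeZero N] (B : Fin N → Fin N → ℝ) (x y : ℝ) : ℝ :=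
  B (qq N x) (qq N y)

theorem stp_graphon {N : ℕ} [NeZero N] (B : Fin N → Fin N → ℝ)
    (hs : ∀ i j, B i j = B j i) (h1 : ∀ i j, B i j ∈ Icc (0:ℝ) 1) : IsGraphon (stp B) := by
  refine ⟨?_, fun x y => hs _ _, fun x y => h1 _ _⟩
  have : Function.uncurry (stp B) = (fun p : Fin N × Fin N => B p.1 p.2) ∘
      (fun p : ℝ × ℝ => (qq N p.1, qq N p.2)) := rfl
  rw [this]
  exact (measurable_of_countable _).comp
    (((measurable_qq N).comp measurable_fst).prodMk ((measurable_qq N).comp measurable_snd))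

open scoped Classical in
theorem homDensity_stp {N m : ℕ} [NeZero N] (B : Fin N → Fin N → ℝ) (F : SimpleGraph (Fin m)) :
    homDensity F (stp B) = homD (Finset.univ.filter
      (fun p : Fin m × Fin m => p.1 < p.2 ∧ F.Adj p.1 p.2)) B / (N:ℝ) ^ m := by
  unfold homDensity homD stp
  exact integral_qq_pi N m (fun f => ∏ p ∈ Finset.univ.filter
      (fun p : Fin m × Fin m => p.1 < p.2 ∧ F.Adj p.1 p.2), B (f p.1) (f p.2))

theorem stp_refine {N k : ℕ} [NeZero N] [NeZero k] (B : Fin N → Fin N → ℝ) :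
    stp B = stp (N := N * k) (fun i j => B (finProdFinEquiv.symm i).1 (finProdFinEquiv.symm j).1) := by
  have : ∀ x, (finProdFinEquiv.symm (qq (N * k) x)).1 = qq N x := by
    intro x
    apply Fin.ext
    simp [qq, Fin.divNat, qn_refine]
  funext x y
  simp only [stp, this]

/-- `L¹` distance of two kernels on the unit square. -/
noncomputable def L1d (U W : ℝ → ℝ → ℝ) : ℝ :=
  ∫ p, |U p.1 p.2 - W p.1 p.2| ∂(μ01.prod μ01)

theorem L1d_nonneg (U W : ℝ → ℝ → ℝ) : 0 ≤ L1d U W :=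
  integral_nonneg fun _ => abs_nonneg _

theorem IsGraphon.integrable {W : ℝ → ℝ → ℝ} (hW : IsGraphon W) (ν : Measure (ℝ × ℝ))
    [IsFiniteMeasure ν] : Integrable (fun p : ℝ × ℝ => W p.1 p.2) ν := by
  refine Integrable.of_bound (C := 1) hW.1.aestronglyMeasurable ?_
  refine Eventually.of_forall fun p => ?_
  have := hW.2.2 p.1 p.2
  rw [Real.norm_eq_abs, abs_of_nonneg this.1]
  exact this.2

theorem exists_grid {W : ℝ → ℝ → ℝ} (hW : IsGraphon W) (ε : ℝ) (hε : 0 < ε) :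
    ∃ (N : ℕ) (_ : NeZero N) (B : Fin N → Fin N → ℝ),
      ∫ p, |W p.1 p.2 - stp B p.1 p.2| ∂(μ01.prod μ01) ≤ ε := by
  obtain ⟨g, -, hg, hgc, hgi⟩ := (hW.integrable (μ01.prod μ01)).exists_hasCompactSupport_integral_sub_le
    (half_pos hε)
  have huc : UniformContinuousOn g (Icc (0:ℝ) 1 ×ˢ Icc (0:ℝ) 1) :=
    (isCompact_Icc.prod isCompact_Icc).uniformContinuousOn_of_continuous hgc.continuousOn
  rw [Metric.uniformContinuousOn_iff] at huc
  obtain ⟨δ, hδ, huc⟩ := huc (ε / 2) (half_pos hε)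
  obtain ⟨n, hn⟩ := exists_nat_one_div_lt hδ
  refine ⟨n + 1, inferInstance, fun i j => g ((i:ℝ) / (n + 1 : ℕ), (j:ℝ) / (n + 1 : ℕ)), ?_⟩
  set B : Fin (n+1) → Fin (n+1) → ℝ :=
    fun i j => g ((i:ℝ) / (n + 1 : ℕ), (j:ℝ) / (n + 1 : ℕ)) with hB
  have hcl : ∀ x ∈ Ico (0:ℝ) 1, |x - ((qq (n+1) x : ℕ):ℝ) / (n + 1 : ℕ)| < δ ∧
      ((qq (n+1) x : ℕ):ℝ) / (n + 1 : ℕ) ∈ Icc (0:ℝ) 1 := by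
    intro x hx
    have h := mem_of_qn (N := n + 1) hx
    have hq : ((qq (n+1) x : ℕ):ℝ) = qn (n+1) x := rfl
    rw [hq]
    have h1 := h.1
    have h2 := h.2
    have hpos : (0:ℝ) ≤ (qn (n+1) x:ℝ) / (n + 1 : ℕ) := by positivity
    rw [add_div] at h2
    push_cast at *
    refine ⟨?_, ?_, ?_⟩
    · rw [abs_of_nonneg (by linarith)]
      linarith
    · exact hpos
    · linarith [hx.2]
  have hae1 : ∀ᵐ p ∂(μ01.prod μ01), p.1 ∈ Ico (0:ℝ) 1 :=
    Measure.quasiMeasurePreserving_fst.ae ae_mem_Ico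
  have hae2 : ∀ᵐ p ∂(μ01.prod μ01), p.2 ∈ Ico (0:ℝ) 1 :=
    Measure.quasiMeasurePreserving_snd.ae ae_mem_Ico
  have hintg : Integrable (fun p : ℝ × ℝ => ‖W p.1 p.2 - g p‖ + ε / 2) (μ01.prod μ01) :=
    ((hW.integrable _).sub hgi).norm.add (integrable_const _)
  calc ∫ p, |W p.1 p.2 - stp B p.1 p.2| ∂(μ01.prod μ01)
      ≤ ∫ p, (‖W p.1 p.2 - g p‖ + ε / 2) ∂(μ01.prod μ01) := by
        refine integral_mono_of_nonneg (Eventually.of_forall fun _ => abs_nonneg _) hintg ?_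
        filter_upwards [hae1, hae2] with p h1 h2
        have a1 := hcl _ h1
        have a2 := hcl _ h2
        have := huc p ⟨Ico_subset_Icc_self h1, Ico_subset_Icc_self h2⟩
          (((qq (n+1) p.1 : ℕ):ℝ) / (n + 1 : ℕ), ((qq (n+1) p.2 : ℕ):ℝ) / (n + 1 : ℕ))
          ⟨a1.2, a2.2⟩ (by
            rw [Prod.dist_eq, max_lt_iff]
            exact ⟨a1.1, a2.1⟩)
        rw [Real.dist_eq] at this
        have e : stp B p.1 p.2 = g (((qq (n+1) p.1 : ℕ):ℝ) / (n + 1 : ℕ),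
          ((qq (n+1) p.2 : ℕ):ℝ) / (n + 1 : ℕ)) := rfl
        rw [e, Real.norm_eq_abs]
        calc _ ≤ |W p.1 p.2 - g p| + |g p - g (((qq (n+1) p.1 : ℕ):ℝ) / (n + 1 : ℕ),
          ((qq (n+1) p.2 : ℕ):ℝ) / (n + 1 : ℕ))| := abs_sub_le _ _ _
          _ ≤ _ := by linarith
    _ = (∫ p, ‖W p.1 p.2 - g p‖ ∂(μ01.prod μ01)) + ε / 2 := by
        have hn : Integrable (fun p : ℝ × ℝ => ‖W p.1 p.2 - g p‖) (μ01.prod μ01) :=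
          ((hW.integrable _).sub hgi).norm
        rw [integral_add hn (integrable_const _)]
        simp
    _ ≤ ε := by linarith

theorem stp_integrable {N : ℕ} [NeZero N] (B : Fin N → Fin N → ℝ) (ν : Measure (ℝ × ℝ))
    [IsFiniteMeasure ν] : Integrable (fun p : ℝ × ℝ => stp B p.1 p.2) ν := by
  have e : (fun p : ℝ × ℝ => stp B p.1 p.2) = (fun p : Fin N × Fin N => B p.1 p.2) ∘
      (fun p : ℝ × ℝ => (qq N p.1, qq N p.2)) := rfl
  have hm : Measurable (fun p : ℝ × ℝ => (qq N p.1, qq N p.2)) :=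
    (((measurable_qq N).comp measurable_fst).prodMk ((measurable_qq N).comp measurable_snd))
  refine Integrable.of_bound (C := ∑ i, ∑ j, |B i j|) ?_ ?_
  · rw [e]
    exact ((measurable_of_countable _).comp hm).aestronglyMeasurable
  · refine Eventually.of_forall fun p => ?_
    rw [Real.norm_eq_abs]
    calc |stp B p.1 p.2| ≤ ∑ j, |B (qq N p.1) j| :=
          Finset.single_le_sum (f := fun j => |B (qq N p.1) j|) (fun _ _ => abs_nonneg _)
            (Finset.mem_univ (qq N p.2))
      _ ≤ _ := Finset.single_le_sum (f := fun i => ∑ j, |B i j|)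
            (fun _ _ => Finset.sum_nonneg fun _ _ => abs_nonneg _) (Finset.mem_univ (qq N p.1))

theorem exists_step {W : ℝ → ℝ → ℝ} (hW : IsGraphon W) (ε : ℝ) (hε : 0 < ε) :
    ∃ (N : ℕ) (_ : NeZero N) (B : Fin N → Fin N → ℝ), (∀ i j, B i j = B j i) ∧
      (∀ i j, B i j ∈ Icc (0:ℝ) 1) ∧ L1d W (stp B) ≤ ε := by
  obtain ⟨N, hN, B, hB⟩ := exists_grid hW ε hε
  refine ⟨N, hN, fun i j => max 0 (min 1 ((B i j + B j i) / 2)), fun i j => by simp [add_comm],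
    fun i j => ⟨le_max_left _ _, by simp⟩, ?_⟩
  have hi := ((hW.integrable (μ01.prod μ01)).sub (stp_integrable B (μ01.prod μ01))).abs
  have hsw : ∫ p : ℝ × ℝ, |W p.2 p.1 - stp B p.2 p.1| ∂(μ01.prod μ01)
      = ∫ p, |W p.1 p.2 - stp B p.1 p.2| ∂(μ01.prod μ01) :=
    integral_prod_swap (μ := μ01) (ν := μ01) (fun p : ℝ × ℝ => |W p.1 p.2 - stp B p.1 p.2|)
  have hi2 : Integrable (fun p : ℝ × ℝ => |W p.2 p.1 - stp B p.2 p.1|) (μ01.prod μ01) := hi.swap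
  have hi1 : Integrable (fun p : ℝ × ℝ => |W p.1 p.2 - stp B p.1 p.2|) (μ01.prod μ01) := hi
  calc L1d W _ ≤ ∫ p : ℝ × ℝ, ((1/2) * |W p.1 p.2 - stp B p.1 p.2|
        + (1/2) * |W p.2 p.1 - stp B p.2 p.1|) ∂(μ01.prod μ01) := by
        refine integral_mono_of_nonneg (Eventually.of_forall fun _ => abs_nonneg _)
          ((hi1.const_mul _).add (hi2.const_mul _)) (Eventually.of_forall fun p => ?_)
        have hw := hW.2.2 p.1 p.2
        have hs := hW.2.1 p.2 p.1
        simp only [stp]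
        rw [hs]
        set w := W p.1 p.2
        set a := B (qq N p.1) (qq N p.2)
        set b := B (qq N p.2) (qq N p.1)
        have h0 := hw.1
        have h1 := hw.2
        have h3 : |w - max 0 (min 1 ((a + b) / 2))| ≤ |w - (a + b) / 2| := by
          rcases le_total 1 ((a+b)/2) with h | h
          · rw [min_eq_left h, max_eq_right (by norm_num), abs_of_nonpos (by linarith),
              abs_of_nonpos (by linarith)]; linarith
          · rw [min_eq_right h]
            rcases le_total 0 ((a+b)/2) with h' | h'
            · rw [max_eq_right h']
            · rw [max_eq_left h', abs_of_nonneg (by linarith), abs_of_nonneg (by linarith)]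
              linarith
        have h4 : |w - (a + b) / 2| ≤ (1/2) * |w - a| + (1/2) * |w - b| := by
          have : w - (a + b) / 2 = (1/2) * (w - a) + (1/2) * (w - b) := by ring
          rw [this]
          refine (abs_add_le _ _).trans ?_
          rw [abs_mul, abs_mul]
          norm_num
        exact h3.trans h4
    _ = ∫ p, |W p.1 p.2 - stp B p.1 p.2| ∂(μ01.prod μ01) := by
        rw [integral_add (hi1.const_mul _) (hi2.const_mul _), integral_const_mul,
          integral_const_mul, hsw]
        ring
    _ ≤ ε := hB

/-- simultaneous approximation of two graphons by step functions on a common grid -/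
theorem exists_step2 {U W : ℝ → ℝ → ℝ} (hU : IsGraphon U) (hW : IsGraphon W) (ε : ℝ) (hε : 0 < ε) :
    ∃ (N : ℕ) (_ : NeZero N) (A B : Fin N → Fin N → ℝ),
      (∀ i j, A i j = A j i) ∧ (∀ i j, A i j ∈ Icc (0:ℝ) 1) ∧
      (∀ i j, B i j = B j i) ∧ (∀ i j, B i j ∈ Icc (0:ℝ) 1) ∧
      L1d U (stp A) ≤ ε ∧ L1d W (stp B) ≤ ε := by
  obtain ⟨N, hN, A, hA, hA1, hA2⟩ := exists_step hU ε hε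
  obtain ⟨M, hM, B, hB, hB1, hB2⟩ := exists_step hW ε hε
  have hB2' := hB2
  rw [stp_refine (k := M)] at hA2
  rw [stp_refine (k := N)] at hB2
  have key : ∀ K : ℕ, K = N * M → ∀ _ : NeZero K, ∀ B' : Fin K → Fin K → ℝ,
      (∀ i j, B' i j = B' j i) → (∀ i j, B' i j ∈ Icc (0:ℝ) 1) → L1d W (stp B') ≤ ε →
      ∃ B'' : Fin (N * M) → Fin (N * M) → ℝ,
        (∀ i j, B'' i j = B'' j i) ∧ (∀ i j, B'' i j ∈ Icc (0:ℝ) 1) ∧ L1d W (stp B'') ≤ ε := by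
    rintro K rfl _ B' h1 h2 h3
    exact ⟨B', h1, h2, h3⟩
  obtain ⟨B'', h1, h2, h3⟩ := key (M * N) (mul_comm _ _) inferInstance _
    (fun i j => hB _ _) (fun i j => hB1 _ _) hB2
  exact ⟨N * M, inferInstance, _, B'', fun i j => hA _ _, fun i j => hA1 _ _, h1, h2, hA2, h3⟩

theorem abs_prod_sub_prod_le {α : Type*} [DecidableEq α] (s : Finset α) (a b : α → ℝ)
    (ha : ∀ i, a i ∈ Icc (0:ℝ) 1) (hb : ∀ i, b i ∈ Icc (0:ℝ) 1) :
    |∏ i ∈ s, a i - ∏ i ∈ s, b i| ≤ ∑ i ∈ s, |a i - b i| := by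
  induction s using Finset.induction_on with
  | empty => simp
  | insert x s hx ih =>
    rw [Finset.prod_insert hx, Finset.prod_insert hx, Finset.sum_insert hx]
    have h1 : |∏ i ∈ s, b i| ≤ 1 := by
      rw [Finset.abs_prod]
      refine Finset.prod_le_one (fun _ _ => abs_nonneg _) fun i _ => ?_
      rw [abs_of_nonneg (hb i).1]; exact (hb i).2
    have h2 : |a x| ≤ 1 := by rw [abs_of_nonneg (ha x).1]; exact (ha x).2
    have : a x * ∏ i ∈ s, a i - b x * ∏ i ∈ s, b i
        = a x * (∏ i ∈ s, a i - ∏ i ∈ s, b i) + (a x - b x) * ∏ i ∈ s, b i := by ring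
    rw [this]
    refine (abs_add_le _ _).trans ?_
    rw [abs_mul, abs_mul]
    have h3 := mul_le_mul_of_nonneg_right h2 (abs_nonneg (∏ i ∈ s, a i - ∏ i ∈ s, b i))
    have h4 := mul_le_mul_of_nonneg_left h1 (abs_nonneg (a x - b x))
    linarith

theorem map_pair {m : ℕ} {i j : Fin m} (hij : i ≠ j) :
    MeasurePreserving (fun x : Fin m → ℝ => (x i, x j)) (Measure.pi fun _ : Fin m => μ01)
      (μ01.prod μ01) := by
  refine ⟨(measurable_pi_apply i).prodMk (measurable_pi_apply j), ?_⟩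
  have h := ProbabilityTheory.iIndepFun_pi (μ := fun _ : Fin m => μ01) (X := fun _ => id)
    (fun _ => aemeasurable_id)
  have h2 := h.indepFun hij
  have h3 : (Measure.pi fun _ : Fin m => μ01).map (fun x => (x i, x j))
      = ((Measure.pi fun _ : Fin m => μ01).map (fun x => x i)).prod
        ((Measure.pi fun _ : Fin m => μ01).map (fun x => x j)) := (ProbabilityTheory.indepFun_iff_map_prod_eq_prod_map_map
    (measurable_pi_apply i).aemeasurable (measurable_pi_apply j).aemeasurable).1 h2
  rw [h3]
  have e : ∀ l : Fin m, (Measure.pi fun _ : Fin m => μ01).map (fun x => x l) = μ01 :=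
    fun l => (measurePreserving_eval (fun _ : Fin m => μ01) l).map_eq
  rw [e i, e j]

open scoped Classical in
theorem homDensity_integrable {m : ℕ} (s : Finset (Fin m × Fin m)) {W : ℝ → ℝ → ℝ}
    (hW : IsGraphon W) : Integrable (fun x : Fin m → ℝ => ∏ p ∈ s, W (x p.1) (x p.2))
      (Measure.pi fun _ : Fin m => μ01) := by
  refine Integrable.of_bound (C := 1) ?_ ?_
  · refine Measurable.aestronglyMeasurable ?_
    refine Finset.measurable_fun_prod _ fun p _ => ?_
    have hm : Measurable (fun x : Fin m → ℝ => (x p.1, x p.2)) :=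
      (measurable_pi_apply p.1).prodMk (measurable_pi_apply p.2)
    exact hW.1.comp hm
  · refine Eventually.of_forall fun x => ?_
    rw [Real.norm_eq_abs, Finset.abs_prod]
    refine Finset.prod_le_one (fun _ _ => abs_nonneg _) fun p _ => ?_
    have := hW.2.2 (x p.1) (x p.2)
    rw [abs_of_nonneg this.1]; exact this.2

theorem L1d_counting {m : ℕ} (F : SimpleGraph (Fin m)) {U W : ℝ → ℝ → ℝ} (hU : IsGraphon U)
    (hW : IsGraphon W) : |homDensity F U - homDensity F W| ≤ (m:ℝ) ^ 2 * L1d U W := by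
  classical
  unfold homDensity
  set s := Finset.univ.filter (fun p : Fin m × Fin m => p.1 < p.2 ∧ F.Adj p.1 p.2) with hs
  have hcard : (s.card : ℝ) ≤ (m:ℝ) ^ 2 := by
    have : s.card ≤ m ^ 2 := by
      refine (Finset.card_le_univ s).trans ?_
      simp [sq]
    exact_mod_cast this
  have hone : ∀ p ∈ s, Integrable (fun x : Fin m → ℝ => |U (x p.1) (x p.2) - W (x p.1) (x p.2)|)
      (Measure.pi fun _ : Fin m => μ01) ∧
      ∫ x : Fin m → ℝ, |U (x p.1) (x p.2) - W (x p.1) (x p.2)| ∂(Measure.pi fun _ : Fin m => μ01)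
        = L1d U W := by
    intro p hp
    have hne : p.1 ≠ p.2 := ne_of_lt (Finset.mem_filter.1 hp).2.1
    have hmp := map_pair hne
    have hi : Integrable (fun q : ℝ × ℝ => |U q.1 q.2 - W q.1 q.2|) (μ01.prod μ01) :=
      ((hU.integrable _).sub (hW.integrable _)).abs
    refine ⟨hmp.integrable_comp_of_integrable hi, ?_⟩
    unfold L1d
    rw [← hmp.map_eq] at hi ⊢
    rw [integral_map hmp.aemeasurable hi.aestronglyMeasurable]
  rw [← integral_sub (homDensity_integrable s hU) (homDensity_integrable s hW)]
  refine (abs_integral_le_integral_abs).trans ?_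
  calc _ ≤ ∫ x : Fin m → ℝ, ∑ p ∈ s, |U (x p.1) (x p.2) - W (x p.1) (x p.2)|
        ∂(Measure.pi fun _ : Fin m => μ01) := by
        refine integral_mono_of_nonneg (Eventually.of_forall fun _ => abs_nonneg _)
          (integrable_finsetSum _ fun p hp => (hone p hp).1) (Eventually.of_forall fun x => ?_)
        exact abs_prod_sub_prod_le s (fun p => U (x p.1) (x p.2)) (fun p => W (x p.1) (x p.2))
          (fun p => hU.2.2 _ _) (fun p => hW.2.2 _ _)
    _ = ∑ p ∈ s, L1d U W := by
        rw [integral_finsetSum _ fun p hp => (hone p hp).1]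
        exact Finset.sum_congr rfl fun p hp => (hone p hp).2
    _ = s.card * L1d U W := by rw [Finset.sum_const, nsmul_eq_mul]
    _ ≤ _ := mul_le_mul_of_nonneg_right hcard (L1d_nonneg _ _)

theorem IsGraphon.comp {W : ℝ → ℝ → ℝ} (hW : IsGraphon W) {φ : ℝ → ℝ} (hφ : Measurable φ) :
    IsGraphon (fun x y => W (φ x) (φ y)) :=
  ⟨hW.1.comp ((hφ.comp measurable_fst).prodMk (hφ.comp measurable_snd)),
    fun _ _ => hW.2.1 _ _, fun _ _ => hW.2.2 _ _⟩

theorem homDensity_comp {m : ℕ} (F : SimpleGraph (Fin m)) {W : ℝ → ℝ → ℝ} (hW : IsGraphon W)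
    {φ : ℝ → ℝ} (hφ : MeasurePreserving φ μ01 μ01) :
    homDensity F (fun x y => W (φ x) (φ y)) = homDensity F W := by
  classical
  unfold homDensity
  set s := Finset.univ.filter (fun p : Fin m × Fin m => p.1 < p.2 ∧ F.Adj p.1 p.2) with hs
  have hmp : MeasurePreserving (fun (x : Fin m → ℝ) i => φ (x i))
      (Measure.pi fun _ : Fin m => μ01) (Measure.pi fun _ : Fin m => μ01) :=
    measurePreserving_pi _ _ fun _ => hφ
  have hi := homDensity_integrable s hW
  have hi' := hi
  rw [← hmp.map_eq] at hi'
  conv_rhs => rw [← hmp.map_eq]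
  rw [integral_map hmp.aemeasurable hi'.aestronglyMeasurable]

theorem L1d_comp {U W : ℝ → ℝ → ℝ} (hU : IsGraphon U) (hW : IsGraphon W)
    {φ : ℝ → ℝ} (hφ : MeasurePreserving φ μ01 μ01) :
    L1d (fun x y => U (φ x) (φ y)) (fun x y => W (φ x) (φ y)) = L1d U W := by
  unfold L1d
  have hmp : MeasurePreserving (Prod.map φ φ) (μ01.prod μ01) (μ01.prod μ01) := hφ.prod hφ
  have hi : Integrable (fun q : ℝ × ℝ => |U q.1 q.2 - W q.1 q.2|) (μ01.prod μ01) :=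
      ((hU.integrable _).sub (hW.integrable _)).abs
  rw [← hmp.map_eq] at hi
  conv_rhs => rw [← hmp.map_eq]
  rw [integral_map hmp.aemeasurable hi.aestronglyMeasurable]
  rfl

theorem restrict_eq_of_subset {S : Set ℝ} (hS : S ⊆ Icc (0:ℝ) 1) (hm : MeasurableSet S) :
    (volume.restrict S : Measure ℝ) = μ01.restrict S := by
  rw [Measure.restrict_restrict hm, inter_eq_left.2 hS]

theorem cutint_eq {D : ℝ → ℝ → ℝ} (hD : Integrable (fun p : ℝ × ℝ => D p.1 p.2) (μ01.prod μ01))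
    {S T : Set ℝ} (hS : MeasurableSet S) (hT : MeasurableSet T) (hS1 : S ⊆ Icc (0:ℝ) 1)
    (hT1 : T ⊆ Icc (0:ℝ) 1) :
    ∫ x in S, ∫ y in T, D x y = ∫ p in S ×ˢ T, D p.1 p.2 ∂(μ01.prod μ01) := by
  rw [setIntegral_prod _ hD.integrableOn, restrict_eq_of_subset hS1 hS, restrict_eq_of_subset hT1 hT]

theorem cutint_le {D : ℝ → ℝ → ℝ} (hD : Integrable (fun p : ℝ × ℝ => D p.1 p.2) (μ01.prod μ01))
    {S T : Set ℝ} (hS : MeasurableSet S) (hT : MeasurableSet T) (hS1 : S ⊆ Icc (0:ℝ) 1)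
    (hT1 : T ⊆ Icc (0:ℝ) 1) :
    |∫ x in S, ∫ y in T, D x y| ≤ ∫ p, |D p.1 p.2| ∂(μ01.prod μ01) := by
  rw [cutint_eq hD hS hT hS1 hT1]
  refine (abs_integral_le_integral_abs).trans ?_
  exact setIntegral_le_integral hD.abs (Eventually.of_forall fun _ => abs_nonneg _)

theorem cutNorm_le {D : ℝ → ℝ → ℝ} {c : ℝ}
    (h : ∀ S T : Set ℝ, MeasurableSet S → MeasurableSet T → S ⊆ Icc (0:ℝ) 1 → T ⊆ Icc (0:ℝ) 1 →
      |∫ x in S, ∫ y in T, D x y| ≤ c) : cutNorm D ≤ c := by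
  unfold cutNorm
  refine csSup_le ⟨_, ∅, ∅, MeasurableSet.empty, MeasurableSet.empty, empty_subset _,
    empty_subset _, rfl⟩ ?_
  rintro r ⟨S, T, a, b, c', d, rfl⟩
  exact h S T a b c' d

theorem le_cutNorm {D : ℝ → ℝ → ℝ} (hD : Integrable (fun p : ℝ × ℝ => D p.1 p.2) (μ01.prod μ01))
    {S T : Set ℝ} (hS : MeasurableSet S) (hT : MeasurableSet T) (hS1 : S ⊆ Icc (0:ℝ) 1)
    (hT1 : T ⊆ Icc (0:ℝ) 1) : |∫ x in S, ∫ y in T, D x y| ≤ cutNorm D := by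
  unfold cutNorm
  refine le_csSup ⟨∫ p, |D p.1 p.2| ∂(μ01.prod μ01), ?_⟩ ⟨S, T, hS, hT, hS1, hT1, rfl⟩
  rintro r ⟨S, T, a, b, c', d, rfl⟩
  exact cutint_le hD a b c' d

theorem cutNorm_nonneg (D : ℝ → ℝ → ℝ) : 0 ≤ cutNorm D := by
  unfold cutNorm
  refine Real.sSup_nonneg ?_
  rintro r ⟨S, T, a, b, c', d, rfl⟩
  exact abs_nonneg _

theorem cutDist_le {U W : ℝ → ℝ → ℝ} {φ : ℝ → ℝ} (h : IsInvMeasurePreserving φ) :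
    cutDist U W ≤ cutNorm (fun x y => U x y - W (φ x) (φ y)) := by
  unfold cutDist
  refine csInf_le ⟨0, ?_⟩ ⟨φ, h, rfl⟩
  rintro r ⟨φ, -, rfl⟩
  exact cutNorm_nonneg _

theorem cutDist_nonneg (U W : ℝ → ℝ → ℝ) : 0 ≤ cutDist U W := by
  unfold cutDist
  refine Real.sInf_nonneg ?_
  rintro r ⟨φ, -, rfl⟩
  exact cutNorm_nonneg _

theorem isInv_id : IsInvMeasurePreserving id :=
  ⟨fun _ h => h, MeasurePreserving.id _, id, fun _ h => h, MeasurePreserving.id _,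
    fun _ _ => rfl, fun _ _ => rfl⟩

theorem exists_of_cutDist_lt {U W : ℝ → ℝ → ℝ} {c : ℝ} (h : cutDist U W < c) :
    ∃ φ, IsInvMeasurePreserving φ ∧ cutNorm (fun x y => U x y - W (φ x) (φ y)) < c := by
  unfold cutDist at h
  obtain ⟨r, ⟨φ, hφ, rfl⟩, hr⟩ := exists_lt_of_csInf_lt (by exact ⟨_, id, isInv_id, rfl⟩) h
  exact ⟨φ, hφ, hr⟩

theorem integral_qq_meas (N : ℕ) [NeZero N] (ν : Measure ℝ) [IsFiniteMeasure ν] (g : Fin N → ℝ) :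
    ∫ x, g (qq N x) ∂ν = ∑ i, ν.real (qq N ⁻¹' {i}) * g i := by
  rw [← integral_map (φ := qq N) (f := g) (measurable_qq N).aemeasurable
    (measurable_of_countable g).aestronglyMeasurable]
  rw [integral_fintype (Integrable.of_finite)]
  refine Finset.sum_congr rfl fun i _ => ?_
  rw [map_measureReal_apply (measurable_qq N) (measurableSet_singleton _), smul_eq_mul]

theorem cutint_stp {N : ℕ} [NeZero N] (D : Fin N → Fin N → ℝ) {S T : Set ℝ}
    (hS : MeasurableSet S) (hT : MeasurableSet T) (hS1 : S ⊆ Icc (0:ℝ) 1)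
    (hT1 : T ⊆ Icc (0:ℝ) 1) :
    ∫ x in S, ∫ y in T, stp D x y = ∑ i, ∑ j, D i j * (μ01.restrict S).real (qq N ⁻¹' {i}) *
      (μ01.restrict T).real (qq N ⁻¹' {j}) := by
  rw [restrict_eq_of_subset hS1 hS, restrict_eq_of_subset hT1 hT]
  have : ∀ x, ∫ y, stp D x y ∂(μ01.restrict T)
      = ∑ j, (μ01.restrict T).real (qq N ⁻¹' {j}) * D (qq N x) j := by
    intro x
    exact integral_qq_meas N (μ01.restrict T) (fun j => D (qq N x) j)
  simp only [this]
  rw [integral_qq_meas N (μ01.restrict S)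
    (fun i => ∑ j, (μ01.restrict T).real (qq N ⁻¹' {j}) * D i j)]
  refine Finset.sum_congr rfl fun i _ => ?_
  rw [Finset.mul_sum]
  refine Finset.sum_congr rfl fun j _ => ?_
  ring

theorem cutint_stp_le {N : ℕ} [NeZero N] {D : Fin N → Fin N → ℝ} {c : ℝ}
    (h : CutLE D (c * (N:ℝ) ^ 2)) {S T : Set ℝ}
    (hS : MeasurableSet S) (hT : MeasurableSet T) (hS1 : S ⊆ Icc (0:ℝ) 1)
    (hT1 : T ⊆ Icc (0:ℝ) 1) : |∫ x in S, ∫ y in T, stp D x y| ≤ c := by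
  have hN : (0:ℝ) < N := by exact_mod_cast NeZero.pos N
  rw [cutint_stp D hS hT hS1 hT1]
  have hb : ∀ (R : Set ℝ) (i : Fin N), 0 ≤ (N:ℝ) * (μ01.restrict R).real (qq N ⁻¹' {i}) ∧
      (N:ℝ) * (μ01.restrict R).real (qq N ⁻¹' {i}) ≤ 1 := by
    intro R i
    refine ⟨mul_nonneg hN.le measureReal_nonneg, ?_⟩
    have h1 : (μ01.restrict R).real (qq N ⁻¹' {i}) ≤ μ01.real (qq N ⁻¹' {i}) := by
      rw [measureReal_restrict_apply (measurable_qq N (measurableSet_singleton _))]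
      exact measureReal_mono inter_subset_left
    rw [fibre_meas, le_div_iff₀ hN] at h1
    linarith
  have := h.fun1 (fun i => (N:ℝ) * (μ01.restrict S).real (qq N ⁻¹' {i}))
    (fun i => (N:ℝ) * (μ01.restrict T).real (qq N ⁻¹' {i})) (fun i => (hb S i).1)
    (fun i => (hb S i).2) (fun i => (hb T i).1) (fun i => (hb T i).2)
  have e : ∑ i, ∑ j, D i j * ((N:ℝ) * (μ01.restrict S).real (qq N ⁻¹' {i})) *
      ((N:ℝ) * (μ01.restrict T).real (qq N ⁻¹' {j})) = (N:ℝ) ^ 2 *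
      ∑ i, ∑ j, D i j * (μ01.restrict S).real (qq N ⁻¹' {i}) *
      (μ01.restrict T).real (qq N ⁻¹' {j}) := by
    simp only [Finset.mul_sum]
    refine Finset.sum_congr rfl fun i _ => Finset.sum_congr rfl fun j _ => ?_
    ring
  rw [e, abs_mul, abs_of_nonneg (by positivity), mul_comm] at this
  exact le_of_mul_le_mul_right this (by positivity)

theorem cutLE_of_cutint {N : ℕ} [NeZero N] {D : Fin N → Fin N → ℝ} {c : ℝ}
    (h : ∀ S T : Set ℝ, MeasurableSet S → MeasurableSet T → S ⊆ Icc (0:ℝ) 1 → T ⊆ Icc (0:ℝ) 1 →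
      |∫ x in S, ∫ y in T, stp D x y| ≤ c) : CutLE D (c * (N:ℝ) ^ 2) := by
  classical
  have hN : (0:ℝ) < N := by exact_mod_cast NeZero.pos N
  intro S T
  have hm : ∀ R : Finset (Fin N), MeasurableSet (qq N ⁻¹' (R : Set (Fin N)) ∩ Icc (0:ℝ) 1) :=
    fun R => (measurable_qq N (Set.toFinite _).measurableSet).inter measurableSet_Icc
  have h1 := h _ _ (hm S) (hm T) inter_subset_right inter_subset_right
  rw [cutint_stp D (hm S) (hm T) inter_subset_right inter_subset_right] at h1
  have hv : ∀ (R : Finset (Fin N)) (i : Fin N),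
      (μ01.restrict (qq N ⁻¹' (R : Set (Fin N)) ∩ Icc (0:ℝ) 1)).real (qq N ⁻¹' {i})
        = if i ∈ R then 1 / (N:ℝ) else 0 := by
    intro R i
    rw [measureReal_restrict_apply (measurable_qq N (measurableSet_singleton _))]
    split_ifs with hi
    · rw [← fibre_meas N i, ← inter_assoc]
      rw [measureReal_restrict_apply' measurableSet_Icc, measureReal_restrict_apply' measurableSet_Icc]
      congr 1
      ext x
      simp only [mem_inter_iff, mem_preimage, mem_singleton_iff, Finset.mem_coe]
      constructor
      · rintro ⟨⟨⟨a, b⟩, c⟩, d⟩; exact ⟨a, c⟩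
      · rintro ⟨a, c⟩; exact ⟨⟨⟨a, a ▸ hi⟩, c⟩, c⟩
    · have : (qq N ⁻¹' {i} ∩ (qq N ⁻¹' (R : Set (Fin N)) ∩ Icc (0:ℝ) 1)) = ∅ := by
        ext x
        simp only [mem_inter_iff, mem_preimage, mem_singleton_iff, Finset.mem_coe,
          mem_empty_iff_false, iff_false]
        rintro ⟨a, b, c⟩
        exact hi (a ▸ b)
      rw [this]; simp
  simp only [hv] at h1
  have e : ∑ i, ∑ j, D i j * (if i ∈ S then 1 / (N:ℝ) else 0) * (if j ∈ T then 1 / (N:ℝ) else 0)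
      = (∑ i ∈ S, ∑ j ∈ T, D i j) / (N:ℝ) ^ 2 := by
    rw [Finset.sum_div, ← Finset.sum_filter_add_sum_filter_not Finset.univ (fun i => i ∈ S)]
    have h0 : ∑ i ∈ Finset.univ.filter (fun i => i ∉ S), ∑ j, D i j *
        (if i ∈ S then 1 / (N:ℝ) else 0) * (if j ∈ T then 1 / (N:ℝ) else 0) = 0 := by
      refine Finset.sum_eq_zero fun i hi => Finset.sum_eq_zero fun j _ => ?_
      rw [if_neg (Finset.mem_filter.1 hi).2]; ring
    rw [h0, add_zero, Finset.filter_mem_eq_inter, Finset.univ_inter]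
    refine Finset.sum_congr rfl fun i hi => ?_
    rw [Finset.sum_div]
    simp only [if_pos hi, mul_ite, mul_zero]
    rw [← Finset.sum_filter, Finset.filter_mem_eq_inter, Finset.univ_inter]
    refine Finset.sum_congr rfl fun j _ => ?_
    field_simp
  rw [e, abs_div, abs_of_pos (show (0:ℝ) < (N:ℝ) ^ 2 by positivity),
    div_le_iff₀ (by positivity)] at h1
  exact h1

/-- The `i`-th cell of the partition of `[0,1)` into `N` intervals. -/
def cell (N i : ℕ) : Set ℝ := Ico ((i:ℝ) / N) ((i + 1 : ℝ) / N)

theorem μ01_eq_sum (N : ℕ) [NeZero N] (s : Set ℝ) (hs : MeasurableSet s) :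
    μ01 s = ∑ i : Fin N, volume (s ∩ cell N i) := by
  have h1 : μ01 s = volume (s ∩ Ico (0:ℝ) 1) := by
    have : μ01 = volume.restrict (Ico (0:ℝ) 1) := (Measure.restrict_congr_set Ico_ae_eq_Icc).symm
    rw [this, Measure.restrict_apply hs]
  have h2 : s ∩ Ico (0:ℝ) 1 = ⋃ i : Fin N, s ∩ cell N i := by
    ext x
    simp only [mem_inter_iff, mem_iUnion]
    constructor
    · rintro ⟨a, b⟩
      exact ⟨qq N x, a, mem_of_qn b⟩
    · rintro ⟨i, a, b⟩
      exact ⟨a, Ico_cell_subset i.2 b⟩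
  rw [h1, h2, measure_iUnion, tsum_fintype]
  · intro i j hij
    refine Set.disjoint_left.2 fun x hx hy => hij ?_
    apply Fin.ext
    rw [← qn_of_mem i.2 hx.2, ← qn_of_mem j.2 hy.2]
  · exact fun i => hs.inter measurableSet_Ico

/-- The interval exchange map of a permutation of the cells. -/
noncomputable def ipm {N : ℕ} [NeZero N] (σ : Equiv.Perm (Fin N)) (x : ℝ) : ℝ :=
  (Ico (0:ℝ) 1).indicator (fun x => (((σ (qq N x) : ℕ):ℝ) - ((qq N x : ℕ):ℝ)) / N) x + x

theorem ipm_of_mem {N : ℕ} [NeZero N] (σ : Equiv.Perm (Fin N)) (i : Fin N) {x : ℝ}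
    (hx : x ∈ cell N i) : ipm σ x = ((σ i : ℕ):ℝ) / N - (i:ℝ) / N + x := by
  have h1 : qq N x = i := Fin.ext (qn_of_mem i.2 hx)
  unfold ipm
  rw [indicator_of_mem (Ico_cell_subset i.2 hx), h1, sub_div]

theorem ipm_mem_iff {N : ℕ} [NeZero N] (σ : Equiv.Perm (Fin N)) (i : Fin N) {x : ℝ} :
    ((σ i : ℕ):ℝ) / N - (i:ℝ) / N + x ∈ cell N (σ i) ↔ x ∈ cell N i := by
  unfold cell
  simp only [mem_Ico, add_div]
  constructor
  · rintro ⟨a, b⟩; constructor <;> linarith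
  · rintro ⟨a, b⟩; constructor <;> linarith

theorem ipm_mem {N : ℕ} [NeZero N] (σ : Equiv.Perm (Fin N)) {x : ℝ} (hx : x ∈ Ico (0:ℝ) 1) :
    ipm σ x ∈ cell N (σ (qq N x)) := by
  have h : x ∈ cell N (qq N x) := mem_of_qn hx
  rw [ipm_of_mem σ _ h, ipm_mem_iff]
  exact h

theorem qq_ipm {N : ℕ} [NeZero N] (σ : Equiv.Perm (Fin N)) {x : ℝ} (hx : x ∈ Ico (0:ℝ) 1) :
    qq N (ipm σ x) = σ (qq N x) :=
  Fin.ext (qn_of_mem (σ (qq N x)).2 (ipm_mem σ hx))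

theorem ipm_of_not_mem {N : ℕ} [NeZero N] (σ : Equiv.Perm (Fin N)) {x : ℝ}
    (hx : x ∉ Ico (0:ℝ) 1) : ipm σ x = x := by
  unfold ipm
  rw [indicator_of_notMem hx, zero_add]

theorem ipm_inv {N : ℕ} [NeZero N] (σ : Equiv.Perm (Fin N)) (x : ℝ) :
    ipm σ⁻¹ (ipm σ x) = x := by
  by_cases hx : x ∈ Ico (0:ℝ) 1
  · have h : x ∈ cell N (qq N x) := mem_of_qn hx
    rw [ipm_of_mem σ⁻¹ _ (ipm_mem σ hx), ipm_of_mem σ _ h]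
    simp
    ring
  · rw [ipm_of_not_mem σ hx, ipm_of_not_mem σ⁻¹ hx]

theorem measurable_ipm {N : ℕ} [NeZero N] (σ : Equiv.Perm (Fin N)) : Measurable (ipm σ) := by
  unfold ipm
  refine Measurable.add (Measurable.indicator ?_ measurableSet_Ico) measurable_id
  exact (measurable_of_countable (fun i : Fin N => (((σ i : ℕ):ℝ) - ((i : ℕ):ℝ)) / N)).comp
    (measurable_qq N)

theorem ipm_mp {N : ℕ} [NeZero N] (σ : Equiv.Perm (Fin N)) :
    MeasurePreserving (ipm σ) μ01 μ01 := by
  refine ⟨measurable_ipm σ, ?_⟩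
  ext s hs
  rw [Measure.map_apply (measurable_ipm σ) hs, μ01_eq_sum N _ (measurable_ipm σ hs),
    μ01_eq_sum N s hs, ← Equiv.sum_comp σ (fun i : Fin N => volume (s ∩ cell N i))]
  refine Finset.sum_congr rfl fun i _ => ?_
  have : ipm σ ⁻¹' s ∩ cell N i =
      (fun x => (((σ i : ℕ):ℝ) / N - (i:ℝ) / N) + x) ⁻¹' (s ∩ cell N (σ i)) := by
    ext x
    rw [mem_preimage]
    constructor
    · rintro ⟨a, b⟩
      rw [mem_preimage, ipm_of_mem σ i b] at a
      exact ⟨a, (ipm_mem_iff σ i).2 b⟩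
    · rintro ⟨a, b⟩
      have b' := (ipm_mem_iff σ i).1 b
      refine ⟨?_, b'⟩
      rw [mem_preimage, ipm_of_mem σ i b']
      exact a
  rw [this, measure_preimage_add]

theorem ipm_mapsTo {N : ℕ} [NeZero N] (σ : Equiv.Perm (Fin N)) :
    MapsTo (ipm σ) (Icc (0:ℝ) 1) (Icc (0:ℝ) 1) := by
  intro x hx
  by_cases h : x ∈ Ico (0:ℝ) 1
  · exact Ico_subset_Icc_self (Ico_cell_subset (σ (qq N x)).2 (ipm_mem σ h))
  · rw [ipm_of_not_mem σ h]; exact hx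

theorem ipm_isInv {N : ℕ} [NeZero N] (σ : Equiv.Perm (Fin N)) :
    IsInvMeasurePreserving (ipm σ) := by
  refine ⟨ipm_mapsTo σ, ipm_mp σ, ipm σ⁻¹, ipm_mapsTo _, ipm_mp _, fun x _ => ipm_inv σ x,
    fun x _ => ?_⟩
  have := ipm_inv σ⁻¹ x
  rwa [inv_inv] at this

theorem cut_close {U V A B : ℝ → ℝ → ℝ} (hU : IsGraphon U) (hV : IsGraphon V) (hA : IsGraphon A)
    (hB : IsGraphon B) {S T : Set ℝ} (hS : MeasurableSet S) (hT : MeasurableSet T)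
    (hS1 : S ⊆ Icc (0:ℝ) 1) (hT1 : T ⊆ Icc (0:ℝ) 1) :
    |∫ x in S, ∫ y in T, (A x y - B x y)| ≤ |∫ x in S, ∫ y in T, (U x y - V x y)|
      + (L1d U A + L1d V B) := by
  have iU := hU.integrable (μ01.prod μ01)
  have iV := hV.integrable (μ01.prod μ01)
  have iA := hA.integrable (μ01.prod μ01)
  have iB := hB.integrable (μ01.prod μ01)
  have i1 : Integrable (fun p : ℝ × ℝ => |U p.1 p.2 - A p.1 p.2|) (μ01.prod μ01) := (iU.sub iA).abs
  have i2 : Integrable (fun p : ℝ × ℝ => |V p.1 p.2 - B p.1 p.2|) (μ01.prod μ01) := (iV.sub iB).abs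
  have i3 : Integrable (fun p : ℝ × ℝ => (A p.1 p.2 - B p.1 p.2)) (μ01.prod μ01) := iA.sub iB
  have i4 : Integrable (fun p : ℝ × ℝ => (U p.1 p.2 - V p.1 p.2)) (μ01.prod μ01) := iU.sub iV
  rw [cutint_eq (D := fun x y => A x y - B x y) i3 hS hT hS1 hT1,
    cutint_eq (D := fun x y => U x y - V x y) i4 hS hT hS1 hT1]
  have key : |∫ p in S ×ˢ T, ((A p.1 p.2 - B p.1 p.2) - (U p.1 p.2 - V p.1 p.2)) ∂(μ01.prod μ01)|
      ≤ L1d U A + L1d V B := by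
    refine (abs_integral_le_integral_abs).trans ?_
    refine (setIntegral_le_integral (i3.sub i4).abs
      (Eventually.of_forall fun _ => abs_nonneg _)).trans ?_
    unfold L1d
    rw [← integral_add i1 i2]
    refine integral_mono_of_nonneg (Eventually.of_forall fun _ => abs_nonneg _) (i1.add i2)
      (Eventually.of_forall fun p => ?_)
    show |(A p.1 p.2 - B p.1 p.2) - (U p.1 p.2 - V p.1 p.2)| ≤
      |U p.1 p.2 - A p.1 p.2| + |V p.1 p.2 - B p.1 p.2|
    have : (A p.1 p.2 - B p.1 p.2) - (U p.1 p.2 - V p.1 p.2) =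
      (A p.1 p.2 - U p.1 p.2) + (V p.1 p.2 - B p.1 p.2) := by ring
    rw [this, abs_sub_comm (U p.1 p.2)]
    exact abs_add_le _ _
  rw [integral_sub i3.integrableOn i4.integrableOn] at key
  have := abs_sub_abs_le_abs_sub (∫ p in S ×ˢ T, (A p.1 p.2 - B p.1 p.2) ∂(μ01.prod μ01))
    (∫ p in S ×ˢ T, (U p.1 p.2 - V p.1 p.2) ∂(μ01.prod μ01))
  linarith

theorem L1d_comm (U V : ℝ → ℝ → ℝ) : L1d U V = L1d V U := by
  unfold L1d
  simp only [abs_sub_comm]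

/-- Counting lemma. -/
theorem counting {m : ℕ} (F : SimpleGraph (Fin m)) {U W : ℝ → ℝ → ℝ} (hU : IsGraphon U)
    (hW : IsGraphon W) {c : ℝ} (h : cutDist U W < c) :
    |homDensity F U - homDensity F W| ≤ (m:ℝ) ^ 2 * c := by
  classical
  obtain ⟨φ, hφ, hc⟩ := exists_of_cutDist_lt h
  rw [← homDensity_comp F hW hφ.2.1]
  have hV := hW.comp hφ.2.1.measurable
  set V : ℝ → ℝ → ℝ := fun x y => W (φ x) (φ y) with hVdef
  have hmain : ∀ δ : ℝ, 0 < δ → |homDensity F U - homDensity F V| ≤ (m:ℝ) ^ 2 * (c + 4 * δ) := by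
    intro δ hδ
    obtain ⟨N, hN, A, B, hA, hA1, hB, hB1, h1, h2⟩ := exists_step2 hU hV δ hδ
    have hNpos : (0:ℝ) < N := by exact_mod_cast NeZero.pos N
    have gA := stp_graphon A hA hA1
    have gB := stp_graphon B hB hB1
    have hcut : CutLE (fun i j => A i j - B i j) ((c + 2 * δ) * (N:ℝ) ^ 2) := by
      refine cutLE_of_cutint fun S T hS hT hS1 hT1 => ?_
      have e1 := cut_close hU hV gA gB hS hT hS1 hT1
      have i4 : Integrable (fun p : ℝ × ℝ => (U p.1 p.2 - V p.1 p.2)) (μ01.prod μ01) :=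
        (hU.integrable _).sub (hV.integrable _)
      have e2 := le_cutNorm (D := fun x y => U x y - V x y) i4 hS hT hS1 hT1
      have e3 : |∫ x in S, ∫ y in T, stp (fun i j => A i j - B i j) x y|
        = |∫ x in S, ∫ y in T, (stp A x y - stp B x y)| := rfl
      rw [e3]
      linarith
    have hcount := homDensity_stp A F
    have hcount2 := homDensity_stp B F
    set E := Finset.univ.filter (fun p : Fin m × Fin m => p.1 < p.2 ∧ F.Adj p.1 p.2) with hE
    have hcard : (E.card : ℝ) ≤ (m:ℝ) ^ 2 := by
      have : E.card ≤ m ^ 2 := by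
        refine (Finset.card_le_univ E).trans ?_
        simp [sq]
      exact_mod_cast this
    have hd := counting_disc A B (c + 2 * δ) (by simpa using NeZero.pos N)
      (by simpa using hcut) hA1 hB1 E (fun e he => (Finset.mem_filter.1 he).2.1)
    simp only [Fintype.card_fin] at hd
    have hc0 : 0 ≤ c + 2 * δ := by
      have := cutNorm_nonneg (fun x y => U x y - W (φ x) (φ y))
      linarith
    have hst : |homDensity F (stp A) - homDensity F (stp B)| ≤ (m:ℝ) ^ 2 * (c + 2 * δ) := by
      rw [hcount, hcount2, ← sub_div, abs_div, abs_of_pos (show (0:ℝ) < (N:ℝ) ^ m by positivity),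
        div_le_iff₀ (by positivity)]
      refine hd.trans ?_
      have := mul_le_mul_of_nonneg_right hcard hc0
      exact mul_le_mul_of_nonneg_right this (by positivity)
    have k1 := L1d_counting F hU gA
    have k2 := L1d_counting F hV gB
    have k1' := mul_le_mul_of_nonneg_left h1 (sq_nonneg (m:ℝ))
    have k2' := mul_le_mul_of_nonneg_left h2 (sq_nonneg (m:ℝ))
    rw [abs_sub_comm] at k2
    have t1 := abs_sub_le (homDensity F U) (homDensity F (stp A)) (homDensity F V)
    have t2 := abs_sub_le (homDensity F (stp A)) (homDensity F (stp B)) (homDensity F V)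
    linarith
  refine le_of_forall_pos_le_add fun e he => ?_
  have hp : (0:ℝ) < 4 * ((m:ℝ) ^ 2 + 1) := by positivity
  have := hmain (e / (4 * ((m:ℝ) ^ 2 + 1))) (div_pos he hp)
  refine this.trans ?_
  have h3 : (m:ℝ) ^ 2 * (4 * (e / (4 * ((m:ℝ) ^ 2 + 1)))) ≤ e := by
    have : (m:ℝ) ^ 2 * (4 * (e / (4 * ((m:ℝ) ^ 2 + 1)))) = (m:ℝ) ^ 2 * e / ((m:ℝ) ^ 2 + 1) := by
      field_simp
    rw [this, div_le_iff₀ (by positivity)]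
    nlinarith
  linarith

/-- Inverse counting lemma. -/
theorem inverse_counting (ε : ℝ) (hε : 0 < ε) : ∃ k : ℕ, ∃ η : ℝ, 0 < η ∧
    ∀ U W : ℝ → ℝ → ℝ, IsGraphon U → IsGraphon W →
      (∀ F : SimpleGraph (Fin k), |homDensity F U - homDensity F W| ≤ η) → cutDist U W ≤ ε := by
  classical
  obtain ⟨k, hk, η, hη, H⟩ := inverse_disc (ε / 2) (half_pos hε)
  have hkz : NeZero k := ⟨hk.ne'⟩
  refine ⟨k, η / 2, half_pos hη, fun U W hU hW hF => ?_⟩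
  have hkpos : (0:ℝ) < k := by exact_mod_cast hk
  obtain ⟨δ, hδ, hδ1, hδ2⟩ : ∃ δ : ℝ, 0 < δ ∧ δ ≤ ε / 4 ∧ (k:ℝ) ^ 2 * δ ≤ η / 4 := by
    refine ⟨min (ε / 4) (η / 4 / (k:ℝ) ^ 2), by positivity, min_le_left _ _, ?_⟩
    have := min_le_right (ε / 4) (η / 4 / (k:ℝ) ^ 2)
    rw [le_div_iff₀ (by positivity)] at this
    linarith
  obtain ⟨N, hN, A, B, hA, hA1, hB, hB1, h1, h2⟩ := exists_step2 hU hW δ hδ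
  have hNpos : (0:ℝ) < N := by exact_mod_cast NeZero.pos N
  have gA := stp_graphon A hA hA1
  have gB := stp_graphon B hB hB1
  have hE : ∀ E ⊆ Epairs k, |homD E A - homD E B| ≤ η * ((Fintype.card (Fin N) : ℕ):ℝ) ^ k := by
    intro E hE
    have hlt : ∀ i j, (i, j) ∈ E → i < j := by
      intro i j h
      have := hE h
      simpa [Epairs] using this
    obtain ⟨F, hadj⟩ : ∃ F : SimpleGraph (Fin k), ∀ i j, F.Adj i j ↔ (i, j) ∈ E ∨ (j, i) ∈ E :=
      ⟨{ Adj := fun i j => (i, j) ∈ E ∨ (j, i) ∈ E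
         symm := ⟨fun i j h => h.symm⟩
         loopless := ⟨fun i h => by
           rcases h with h | h <;> exact lt_irrefl _ (hlt _ _ h)⟩ }, fun i j => Iff.rfl⟩
    have hfil : Finset.univ.filter (fun p : Fin k × Fin k => p.1 < p.2 ∧ F.Adj p.1 p.2) = E := by
      ext ⟨i, j⟩
      simp only [Finset.mem_filter, Finset.mem_univ, true_and, hadj]
      constructor
      · rintro ⟨a, b | b⟩
        · exact b
        · exact absurd (hlt _ _ b) (not_lt.2 a.le)
      · intro h
        exact ⟨hlt _ _ h, Or.inl h⟩
    have cA := homDensity_stp A F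
    have cB := homDensity_stp B F
    rw [hfil] at cA cB
    have k1 := L1d_counting F hU gA
    have k2 := L1d_counting F hW gB
    have k1' := mul_le_mul_of_nonneg_left h1 (sq_nonneg (k:ℝ))
    have k2' := mul_le_mul_of_nonneg_left h2 (sq_nonneg (k:ℝ))
    rw [abs_sub_comm] at k1
    have t1 := abs_sub_le (homDensity F (stp A)) (homDensity F U) (homDensity F (stp B))
    have t2 := abs_sub_le (homDensity F U) (homDensity F W) (homDensity F (stp B))
    have hst : |homDensity F (stp A) - homDensity F (stp B)| ≤ η := by
      have := hF F
      linarith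
    rw [cA, cB, ← sub_div, abs_div, abs_of_pos (show (0:ℝ) < (N:ℝ) ^ k by positivity),
        div_le_iff₀ (by positivity)] at hst
    simpa using hst
  obtain ⟨σ, hσ⟩ := H (Fin N) (by simpa using NeZero.pos N) A B hA hA1 hB hB1 hE
  have hσ2 := hσ.comp_equiv (finProdFinEquiv (m := N) (n := k)).symm
  set σ' : Equiv.Perm (Fin (N * k)) := finProdFinEquiv.permCongr σ with hσ'
  have hφ := ipm_isInv σ'
  set φ := ipm σ' with hφdef
  have gBφ := gB.comp hφ.2.1.measurable
  have gWφ := hW.comp hφ.2.1.measurable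
  refine (cutDist_le hφ).trans (cutNorm_le fun S T hS hT hS1 hT1 => ?_)
  have e1 := cut_close gA gBφ hU gWφ hS hT hS1 hT1
  rw [L1d_comm _ U, L1d_comp gB hW hφ.2.1, L1d_comm _ W] at e1
  set D : Fin (N * k) → Fin (N * k) → ℝ := fun i j =>
    A (finProdFinEquiv.symm i).1 (finProdFinEquiv.symm j).1 -
      B (σ (finProdFinEquiv.symm i)).1 (σ (finProdFinEquiv.symm j)).1 with hD
  have hcutD : CutLE D (ε / 2 * ((N * k : ℕ):ℝ) ^ 2) := by
    have := hσ2
    simp only [Fintype.card_fin] at this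
    push_cast
    exact this
  have e2 := cutint_stp_le hcutD hS hT hS1 hT1
  have hq1 : ∀ x, (finProdFinEquiv.symm (qq (N * k) x)).1 = qq N x := by
    intro x
    apply Fin.ext
    simp [qq, Fin.divNat, qn_refine]
  have hq2 : ∀ x ∈ Ico (0:ℝ) 1, (σ (finProdFinEquiv.symm (qq (N * k) x))).1 = qq N (φ x) := by
    intro x hx
    rw [← hq1 (φ x), hφdef, qq_ipm σ' hx, hσ']
    simp
  have e3 : ∫ x in S, ∫ y in T, stp D x y =
      ∫ x in S, ∫ y in T, (stp A x y - stp B (φ x) (φ y)) := by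
    have i3 : Integrable (fun p : ℝ × ℝ => (stp A p.1 p.2 - stp B (φ p.1) (φ p.2)))
      (μ01.prod μ01) := (gA.integrable _).sub (gBφ.integrable _)
    rw [cutint_eq (stp_integrable D _) hS hT hS1 hT1,
      cutint_eq (D := fun x y => stp A x y - stp B (φ x) (φ y)) i3 hS hT hS1 hT1]
    refine integral_congr_ae (ae_restrict_of_ae ?_)
    have hae1 : ∀ᵐ p ∂(μ01.prod μ01), p.1 ∈ Ico (0:ℝ) 1 :=
      Measure.quasiMeasurePreserving_fst.ae ae_mem_Ico
    have hae2 : ∀ᵐ p ∂(μ01.prod μ01), p.2 ∈ Ico (0:ℝ) 1 :=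
      Measure.quasiMeasurePreserving_snd.ae ae_mem_Ico
    filter_upwards [hae1, hae2] with p p1 p2
    simp only [stp, hD]
    rw [hq1, hq1, hq2 _ p1, hq2 _ p2]
  rw [e3] at e2
  linarith

/-- For a sequence of graphons: convergence of all homomorphism densities is equivalent to
being Cauchy in the cut distance; and convergence of all homomorphism densities to those of a
graphon `W` is equivalent to convergence to `W` in cut distance. -/
theorem graphon_conv_iff_cutDist (Wn : ℕ → ℝ → ℝ → ℝ) (hWn : ∀ n, IsGraphon (Wn n))
    (W : ℝ → ℝ → ℝ) (hW : IsGraphon W) :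
    ((∀ (m : ℕ) (F : SimpleGraph (Fin m)), ∃ L : ℝ,
        Filter.Tendsto (fun n => homDensity F (Wn n)) Filter.atTop (nhds L)) ↔
      (∀ ε : ℝ, 0 < ε → ∃ N : ℕ, ∀ i ≥ N, ∀ j ≥ N, cutDist (Wn i) (Wn j) ≤ ε)) ∧
    ((∀ (m : ℕ) (F : SimpleGraph (Fin m)),
        Filter.Tendsto (fun n => homDensity F (Wn n)) Filter.atTop (nhds (homDensity F W))) ↔
      Filter.Tendsto (fun n => cutDist (Wn n) W) Filter.atTop (nhds 0)) := by
  have hfin : ∀ (k : ℕ) (P : ℕ → SimpleGraph (Fin k) → Prop),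
      (∀ F, ∃ N, ∀ n ≥ N, P n F) → ∃ N, ∀ n ≥ N, ∀ F, P n F := by
    intro k P hP
    choose N hN using hP
    classical
    refine ⟨Finset.univ.sup N, fun n hn F => hN F n (le_trans (Finset.le_sup (Finset.mem_univ F)) hn)⟩
  refine ⟨⟨fun h ε hε => ?_, fun h m F => ?_⟩, ⟨fun h => ?_, fun h m F => ?_⟩⟩
  · obtain ⟨k, η, hη, H⟩ := inverse_counting ε hε
    have h1 : ∀ F : SimpleGraph (Fin k), ∃ N, ∀ n ≥ N, ∀ j ≥ N,
        |homDensity F (Wn n) - homDensity F (Wn j)| ≤ η := by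
      intro F
      obtain ⟨L, hL⟩ := h k F
      obtain ⟨N, hN⟩ := Metric.tendsto_atTop.1 hL (η / 2) (half_pos hη)
      refine ⟨N, fun n hn j hj => ?_⟩
      have a := hN n hn
      have b := hN j hj
      rw [Real.dist_eq] at a b
      rw [abs_sub_comm] at b
      have := abs_sub_le (homDensity F (Wn n)) L (homDensity F (Wn j))
      linarith
    choose N hN using h1
    classical
    refine ⟨Finset.univ.sup N, fun i hi j hj => H _ _ (hWn i) (hWn j) fun F => ?_⟩
    have hle : N F ≤ Finset.univ.sup N := Finset.le_sup (Finset.mem_univ F)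
    exact hN F i (hle.trans hi) j (hle.trans hj)
  · refine cauchySeq_tendsto_of_complete (Metric.cauchySeq_iff.2 fun ε hε => ?_)
    have hp : (0:ℝ) < 2 * ((m:ℝ) ^ 2 + 1) := by positivity
    have hp2 : 0 < ε / (2 * ((m:ℝ) ^ 2 + 1)) := div_pos hε hp
    obtain ⟨N, hN⟩ := h (ε / (2 * ((m:ℝ) ^ 2 + 1)) / 2) (half_pos hp2)
    refine ⟨N, fun i hi j hj => ?_⟩
    have := counting F (hWn i) (hWn j) (lt_of_le_of_lt (hN i hi j hj) (half_lt_self hp2))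
    rw [Real.dist_eq]
    refine lt_of_le_of_lt this ?_
    rw [mul_div_assoc', div_lt_iff₀ hp]
    nlinarith [sq_nonneg (m:ℝ)]
  · rw [Metric.tendsto_atTop]
    intro ε hε
    obtain ⟨k, η, hη, H⟩ := inverse_counting (ε / 2) (half_pos hε)
    have h1 : ∀ F : SimpleGraph (Fin k), ∃ N, ∀ n ≥ N,
        |homDensity F (Wn n) - homDensity F W| ≤ η := by
      intro F
      obtain ⟨N, hN⟩ := Metric.tendsto_atTop.1 (h k F) η hη
      refine ⟨N, fun n hn => ?_⟩
      have a := hN n hn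
      rw [Real.dist_eq] at a
      exact a.le
    obtain ⟨N, hN⟩ := hfin k _ h1
    refine ⟨N, fun n hn => ?_⟩
    have := H _ _ (hWn n) hW (hN n hn)
    rw [Real.dist_eq, sub_zero, abs_of_nonneg (cutDist_nonneg _ _)]
    linarith
  · rw [Metric.tendsto_atTop] at h ⊢
    intro ε hε
    have hp : (0:ℝ) < 2 * ((m:ℝ) ^ 2 + 1) := by positivity
    have hp2 : 0 < ε / (2 * ((m:ℝ) ^ 2 + 1)) := div_pos hε hp
    obtain ⟨N, hN⟩ := h (ε / (2 * ((m:ℝ) ^ 2 + 1))) hp2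
    refine ⟨N, fun n hn => ?_⟩
    have a := hN n hn
    rw [Real.dist_eq, sub_zero] at a
    have := counting F (hWn n) hW (lt_of_le_of_lt (le_abs_self _) a)
    rw [Real.dist_eq]
    refine lt_of_le_of_lt this ?_
    rw [mul_div_assoc', div_lt_iff₀ hp]
    nlinarith [sq_nonneg (m:ℝ)]
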